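/- arXiv:1310.0650 — 7 statements merged into one kernel-verified Lean document; each statement's English description precedes it below -/
import Mathlib

section
/- Let S be a finite alphabet and let L ⊆ S* be a factor-closed language (i.e., if w ∈ L and v is a factor of w, then v ∈ L). Then the winning set W(L) ⊆ {A,B}* is factor-closed. -/
/-!
Word games (Salo–Törmä, "Playing with Subshifts").
The players' alphabet is `Bool`: player `A` is `false`, player `B` is `true`
(so that the order `A < B` is the order `false < true` on `Bool`).
-/

/-- Auxiliary function for the play of a finite ordered word game: the word built so far
is accumulated in the second argument, and at each step the player indicated by the
turn order picks the next letter as a function of the word built so far. -/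
def playAux {S : Type*} (sA sB : List S → S) : List Bool → List S → List S
  | [], w => w
  | b :: rest, w => playAux sA sB rest (w ++ [(if b then sB else sA) w])

/-- The play of the finite ordered word game with turn order `a`,
where `A` uses strategy `sA` and `B` uses strategy `sB`. -/
def play {S : Type*} (sA sB : List S → S) (a : List Bool) : List S :=
  playAux sA sB a []

/-- The winning set `W(X)` of a target set `X` of finite words: the set of turn orders
for which `A` has a winning strategy. -/
def Wset {S : Type*} (X : Set (List S)) : Set (List Bool) :=
  { a | ∃ sA : List S → S, ∀ sB : List S → S, play sA sB a ∈ X }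

/-!
A factor is a prefix of a suffix, so prefixes and suffixes can be treated separately. A strategy
winning on `a` also wins on each prefix of `a`, since the shorter play is a prefix of the longer
one. For a turn order `p ++ b`, fix one play `u` of `p`, say the one where `B` copies `A`'s
strategy: if `B` opens with `u` and then plays any `s` on the remaining letters, the play is `u`
followed by a play of `b`, so `A` wins on `b` by pretending that `u` has already been played.
-/

section

variable {S : Type*} {sA sA' sB sB' : List S → S} {X : Set (List S)} {a b : List Bool}

/-- The strategy `s` played as if the word `u` had been written before the start of the game. -/
def strategyAfter (u : List S) (s : List S → S) : List S → S :=
  fun w => s (u ++ w)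

/-- The strategy that follows `t` for the first `n` letters and then starts `s` afresh, hiding
those `n` letters from it. -/
def switchStrategy (n : ℕ) (t s : List S → S) : List S → S :=
  fun w => if w.length < n then t w else s (w.drop n)

theorem switchStrategy_of_length_lt {n : ℕ} {w : List S} (t s : List S → S)
    (hw : w.length < n) : switchStrategy n t s w = t w :=
  if_pos hw

theorem strategyAfter_switchStrategy (u : List S) (t s : List S → S) :
    strategyAfter u (switchStrategy u.length t s) = s := by
  ext w
  simp [strategyAfter, switchStrategy]

theorem playAux_append (sA sB : List S → S) (a b : List Bool) (w : List S) :
    playAux sA sB (a ++ b) w = playAux sA sB b (playAux sA sB a w) := by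
  induction a generalizing w with
  | nil => rfl
  | cons _ _ ih => exact ih _

theorem play_append_singleton (sA sB : List S → S) (a : List Bool) (i : Bool) :
    play sA sB (a ++ [i]) = play sA sB a ++ [(if i then sB else sA) (play sA sB a)] :=
  playAux_append sA sB a [i] []

theorem length_play (sA sB : List S → S) (a : List Bool) :
    (play sA sB a).length = a.length := by
  induction a using List.reverseRecOn with
  | nil => rfl
  | append_singleton a i ih =>
    simp only [play_append_singleton, List.length_append, ih, List.length_singleton]

theorem play_congr (hA : ∀ w : List S, w.length < a.length → sA w = sA' w)
    (hB : ∀ w : List S, w.length < a.length → sB w = sB' w) :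
    play sA sB a = play sA' sB' a := by
  induction a using List.reverseRecOn with
  | nil => rfl
  | append_singleton a i ih =>
    have length_lt : a.length < (a ++ [i]).length := by simp
    have same_play : play sA sB a = play sA' sB' a :=
      ih (fun w hw => hA w (hw.trans length_lt)) fun w hw => hB w (hw.trans length_lt)
    have play_length_lt : (play sA' sB' a).length < (a ++ [i]).length := by
      rwa [length_play]
    cases i <;> simp [play_append_singleton, same_play, hA _ play_length_lt, hB _ play_length_lt]

theorem play_append (sA sB : List S → S) (a b : List Bool) :
    play sA sB (a ++ b) = play sA sB a ++
      play (strategyAfter (play sA sB a) sA) (strategyAfter (play sA sB a) sB) b := by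
  induction b using List.reverseRecOn with
  | nil => simp [play, playAux]
  | append_singleton b i ih =>
    rw [← List.append_assoc, play_append_singleton, ih, play_append_singleton, List.append_assoc]
    cases i <;> rfl

theorem play_append_switchStrategy (sA t s : List S → S) (a b : List Bool) :
    play sA (switchStrategy a.length t s) (a ++ b) =
      play sA t a ++ play (strategyAfter (play sA t a) sA) s b := by
  have opening : play sA (switchStrategy a.length t s) a = play sA t a :=
    play_congr (fun _ _ => rfl) fun _ => switchStrategy_of_length_lt t s
  have continuation :
      strategyAfter (play sA t a) (switchStrategy a.length t s) = s := by
    simpa only [length_play] using strategyAfter_switchStrategy (play sA t a) t s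
  rw [play_append, opening, continuation]

theorem mem_Wset_of_isPrefix (hX : ∀ w ∈ X, ∀ v : List S, v <+: w → v ∈ X)
    (ha : a ∈ Wset X) (hb : b <+: a) : b ∈ Wset X := by
  obtain ⟨sA, hsA⟩ := ha
  obtain ⟨q, rfl⟩ := hb
  refine ⟨sA, fun sB => hX _ (hsA sB) _ ?_⟩
  rw [play_append]
  exact List.prefix_append _ _

theorem mem_Wset_of_isSuffix (hX : ∀ w ∈ X, ∀ v : List S, v <:+ w → v ∈ X)
    (ha : a ∈ Wset X) (hb : b <:+ a) : b ∈ Wset X := by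
  obtain ⟨sA, hsA⟩ := ha
  obtain ⟨p, rfl⟩ := hb
  refine ⟨strategyAfter (play sA sA p) sA, fun sB =>
    hX _ (hsA (switchStrategy p.length sA sB)) _ ?_⟩
  rw [play_append_switchStrategy]
  exact List.suffix_append _ _

end

theorem winningSet_factorClosed_general {S : Type*} (L : Set (List S))
    (hL : ∀ w ∈ L, ∀ v : List S, v <:+: w → v ∈ L) :
    ∀ a ∈ Wset L, ∀ b : List Bool, b <:+: a → b ∈ Wset L := by
  intro a ha b hb
  obtain ⟨c, hbc, hca⟩ := List.infix_iff_prefix_suffix.mp hb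
  have hc : c ∈ Wset L := mem_Wset_of_isSuffix (fun w hw v hv => hL w hw v hv.isInfix) ha hca
  exact mem_Wset_of_isPrefix (fun w hw v hv => hL w hw v hv.isInfix) hc hbc

/-- If `L ⊆ S*` is factor-closed, then the winning set
`W(L) ⊆ {A,B}*` is factor-closed. -/
theorem winningSet_factorClosed {S : Type*} [Fintype S] [Nonempty S]
    (L : Set (List S)) (hL : ∀ w ∈ L, ∀ v : List S, v <:+: w → v ∈ L) :
    ∀ a ∈ Wset L, ∀ b : List Bool, b <:+: a → b ∈ Wset L :=
  winningSet_factorClosed_general L hL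
end

section
/- Let S be a finite alphabet and let L ⊆ S* be a regular language. Then the winning set W(L) ⊆ {A,B}* is a regular language. -/
/-!
Once the first letter of a word game has been played, what remains is a word game again, for the
shorter turn order and the words that complete the target. Hence the states of a DFA from which `A`
wins are computed by backward induction on the turn order: one forms a predecessor set, existential
when `A` moves and universal when `B` moves. Since a finite DFA has only finitely many sets of
states, this computation is itself a finite automaton reading the turn order from right to left.
-/

section

variable {S σ : Type*}

/-- The strategy opening with the letter `s` and continuing with the strategy `f t`, applied to the
rest of the word, once the first letter has turned out to be `t`. The letter `t` may differ from
`s`, as it may be chosen by the opponent. -/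
def openingStrategy (s : S) (f : S → List S → S) : List S → S
  | [] => s
  | t :: w => f t w

theorem playAux_cons_right (sA sB : List S → S) (a : List Bool) (s : S) (w : List S) :
    playAux sA sB a (s :: w) =
      s :: playAux (fun u => sA (s :: u)) (fun u => sB (s :: u)) a w := by
  induction a generalizing w with
  | nil => rfl
  | cons b a ih => cases b <;> exact ih _

theorem play_cons_false (sA sB : List S → S) (a : List Bool) :
    play sA sB (false :: a) =
      sA [] :: play (fun w => sA (sA [] :: w)) (fun w => sB (sA [] :: w)) a :=
  playAux_cons_right sA sB a (sA []) []

theorem play_cons_true (sA sB : List S → S) (a : List Bool) :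
    play sA sB (true :: a) =
      sB [] :: play (fun w => sA (sB [] :: w)) (fun w => sB (sB [] :: w)) a :=
  playAux_cons_right sA sB a (sB []) []

theorem nil_mem_wset_iff [Nonempty S] {X : Set (List S)} : [] ∈ Wset X ↔ [] ∈ X := by
  simp [Wset, play, playAux]

theorem cons_false_mem_wset_iff {X : Set (List S)} {a : List Bool} :
    false :: a ∈ Wset X ↔ ∃ s, a ∈ Wset (List.cons s ⁻¹' X) := by
  constructor
  · rintro ⟨sA, hA⟩
    refine ⟨sA [], fun w => sA (sA [] :: w), fun sB => ?_⟩
    have hplay := hA (openingStrategy (sA []) fun _ => sB)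
    rwa [play_cons_false] at hplay
  · rintro ⟨s, sA, hA⟩
    refine ⟨openingStrategy s fun _ => sA, fun sB => ?_⟩
    rw [play_cons_false]
    exact hA fun w => sB (s :: w)

theorem cons_true_mem_wset_iff [Nonempty S] {X : Set (List S)} {a : List Bool} :
    true :: a ∈ Wset X ↔ ∀ s, a ∈ Wset (List.cons s ⁻¹' X) := by
  constructor
  · rintro ⟨sA, hA⟩ s
    refine ⟨fun w => sA (s :: w), fun sB => ?_⟩
    have hplay := hA (openingStrategy s fun _ => sB)
    rwa [play_cons_true] at hplay
  · intro h
    choose sA hA using h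
    refine ⟨openingStrategy (Classical.arbitrary S) sA, fun sB => ?_⟩
    rw [play_cons_true]
    exact hA (sB []) fun w => sB (sB [] :: w)

/-- The controllable predecessor of a set `V` of states, as in the theory of games on graphs: the
states from which `A` can make sure that the next state lies in `V`, when the player `b` chooses
the next letter. -/
def controllablePred (M : DFA S σ) : Bool → Set σ → Set σ
  | false, V => {q | ∃ s, M.step q s ∈ V}
  | true, V => {q | ∀ s, M.step q s ∈ V}

/-- The winning region of `A` for the turn order `a`: the states of `M` from which `A` can force
the automaton to accept. -/
def winningRegion (M : DFA S σ) (a : List Bool) : Set σ :=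
  {q | a ∈ Wset (M.acceptsFrom q : Set (List S))}

theorem winningRegion_nil [Nonempty S] (M : DFA S σ) : winningRegion M [] = M.accept :=
  Set.ext fun _ => nil_mem_wset_iff

theorem winningRegion_cons [Nonempty S] (M : DFA S σ) (b : Bool) (a : List Bool) :
    winningRegion M (b :: a) = controllablePred M b (winningRegion M a) := by
  cases b
  · exact Set.ext fun _ => cons_false_mem_wset_iff
  · exact Set.ext fun _ => cons_true_mem_wset_iff

/-- The automaton that performs the backward induction: reading a turn order from its last letter
to its first, it keeps track of the winning region of the part read so far. -/
def backwardDFA (M : DFA S σ) : DFA Bool (Set σ) where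
  step V b := controllablePred M b V
  start := M.accept
  accept := {V | M.start ∈ V}

theorem eval_backwardDFA [Nonempty S] (M : DFA S σ) (a : List Bool) :
    (backwardDFA M).eval a = winningRegion M a.reverse := by
  induction a using List.reverseRecOn with
  | nil => exact (winningRegion_nil M).symm
  | append_singleton a b ih =>
    rw [DFA.eval_append_singleton, ih, List.reverse_concat, winningRegion_cons]
    rfl

theorem accepts_backwardDFA [Nonempty S] (M : DFA S σ) :
    (backwardDFA M).accepts = Language.reverse (Wset (M.accepts : Set (List S))) := by
  ext a
  rw [DFA.mem_accepts, eval_backwardDFA]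
  rfl

end

theorem winningSet_regular_general {S : Type*} [Nonempty S] (L : Language S) (hL : L.IsRegular) :
    Language.IsRegular (Wset (L : Set (List S)) : Language Bool) := by
  obtain ⟨σ, _, M, rfl⟩ := hL
  apply Language.IsRegular.of_reverse
  rw [← accepts_backwardDFA]
  exact ⟨Set σ, inferInstance, backwardDFA M, rfl⟩

/-- If `L ⊆ S*` is a regular language, then the winning set
`W(L) ⊆ {A,B}*` is a regular language. -/
theorem winningSet_regular {S : Type*} [Fintype S] [Nonempty S]
    (L : Language S) (hL : L.IsRegular) :
    Language.IsRegular (Wset (L : Set (List S)) : Language Bool) :=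
  winningSet_regular_general L hL
end

section
/- Let X ⊆ S^ℕ be a sofic shift, i.e., a one-directional subshift whose language B(X) is a regular language. Then the winning shift W(X) ⊆ {A,B}^ℕ is a sofic shift. -/
/-- The prefix of length `n` of the play of the infinite ordered word game with
turn order `a : ℕ → Bool`. -/
def playPref {S : Type*} (sA sB : List S → S) (a : ℕ → Bool) : ℕ → List S
  | 0 => []
  | n + 1 => playPref sA sB a n ++ [(if a n then sB else sA) (playPref sA sB a n)]

/-- The play of the infinite ordered word game: coordinate `i` is chosen by the player
`a i` as a function of the word `x_0 ⋯ x_{i-1}` built so far. -/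
def playInf {S : Type*} (sA sB : List S → S) (a : ℕ → Bool) : ℕ → S :=
  fun i => (if a i then sB else sA) (playPref sA sB a i)

/-- The winning shift `W(X)` of a target set `X ⊆ S^ℕ`: the set of turn orders for
which `A` has a winning strategy in the infinite game. -/
def WShift {S : Type*} (X : Set (ℕ → S)) : Set (ℕ → Bool) :=
  { a | ∃ sA : List S → S, ∀ sB : List S → S, playInf sA sB a ∈ X }

/-- The shift map on one-directional configurations. -/
def shiftN {S : Type*} (x : ℕ → S) : ℕ → S := fun i => x (i + 1)

/-- The language `B(X)` of a set of one-directional configurations: all finite words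
occurring as factors of its elements. -/
def langN {S : Type*} (X : Set (ℕ → S)) : Set (List S) :=
  { w | ∃ x ∈ X, ∃ i : ℕ, w = List.ofFn fun j : Fin w.length => x (i + j.val) }

/-!
The game is a safety game played on the states of an automaton. In the minimal automaton of `B(X)`,
for each finite turn order `u` there is a set of states from which `A` can force acceptance of the
play, and it is computed by folding a controlled predecessor operator along `u` from the right.
There are finitely many sets of states, so this fold is itself a finite automaton that reads `u`
backwards. For an infinite turn order these sets decrease along its prefixes and hence stabilize,
so winning every finite game yields a single strategy that wins the infinite one.
-/

open Set Filter Topology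

section Factors

variable {T : Type*}

/-- The factor `x_i ⋯ x_{i+k-1}` of length `k` of the configuration `x`. -/
def factor (x : ℕ → T) (i k : ℕ) : List T := List.ofFn fun j : Fin k => x (i + j)

@[simp]
theorem length_factor (x : ℕ → T) (i k : ℕ) : (factor x i k).length = k :=
  List.length_ofFn

theorem factor_succ (x : ℕ → T) (i k : ℕ) :
    factor x i (k + 1) = x i :: factor x (i + 1) k := by
  simp [factor, List.ofFn_succ, Nat.add_assoc, Nat.add_comm 1]

theorem factor_succ' (x : ℕ → T) (i k : ℕ) :
    factor x i (k + 1) = factor x i k ++ [x (i + k)] := by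
  rw [factor, List.ofFn_succ', List.concat_eq_append]
  rfl

theorem factor_zero_succ' (x : ℕ → T) (k : ℕ) : factor x 0 (k + 1) = factor x 0 k ++ [x k] := by
  rw [factor_succ', Nat.zero_add]

theorem factor_eq_factor_iff {x y : ℕ → T} {i j k : ℕ} :
    factor x i k = factor y j k ↔ ∀ m < k, x (i + m) = y (j + m) := by
  rw [factor, factor, List.ofFn_inj, funext_iff, Fin.forall_iff]

theorem factor_shiftN (x : ℕ → T) (i k : ℕ) : factor (shiftN x) i k = factor x (i + 1) k :=
  factor_eq_factor_iff.2 fun m _ => congrArg x (Nat.add_right_comm i m 1)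

theorem factor_iterate_shiftN (x : ℕ → T) (i k : ℕ) :
    factor (shiftN^[i] x) 0 k = factor x i k := by
  induction i generalizing x with
  | zero => rfl
  | succ i ih => rw [Function.iterate_succ_apply, ih, factor_shiftN]

theorem factor_getD (w : List T) (d : T) : factor (fun i => w.getD i d) 0 w.length = w := by
  simp [factor]

end Factors

section Languages

variable {T : Type*} {X : Set (ℕ → T)}

theorem mem_langN {w : List T} : w ∈ langN X ↔ ∃ x ∈ X, ∃ i, factor x i w.length = w := by
  simp only [langN, factor, mem_ofPred_eq, eq_comm]

theorem mem_langN_iff_exists_prefix (hX : ∀ x ∈ X, shiftN x ∈ X) {w : List T} :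
    w ∈ langN X ↔ ∃ x ∈ X, factor x 0 w.length = w := by
  rw [mem_langN]
  refine ⟨fun ⟨x, hx, i, hw⟩ => ⟨shiftN^[i] x, MapsTo.iterate hX i hx, ?_⟩,
    fun ⟨x, hx, hw⟩ => ⟨x, hx, 0, hw⟩⟩
  rw [factor_iterate_shiftN, hw]

theorem factor_mem_langN {x : ℕ → T} (hx : x ∈ X) (i k : ℕ) : factor x i k ∈ langN X :=
  mem_langN.2 ⟨x, hx, i, by rw [length_factor]⟩

theorem mem_langN_of_append_singleton {w : List T} {s : T} (h : w ++ [s] ∈ langN X) :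
    w ∈ langN X := by
  obtain ⟨x, hx, i, hw⟩ := mem_langN.1 h
  rw [List.length_append, List.length_singleton, factor_succ'] at hw
  exact mem_langN.2 ⟨x, hx, i, (List.append_inj hw (length_factor ..)).1⟩

theorem exists_append_singleton_mem_langN {w : List T} (h : w ∈ langN X) :
    ∃ s, w ++ [s] ∈ langN X := by
  obtain ⟨x, hx, i, hw⟩ := mem_langN.1 h
  refine ⟨x (i + w.length), ?_⟩
  rw [← hw, length_factor, ← factor_succ']
  exact factor_mem_langN hx ..

variable [TopologicalSpace T]

theorem mem_iff_forall_factor_mem_langN (hXcl : IsClosed X) (hX : ∀ x ∈ X, shiftN x ∈ X)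
    {x : ℕ → T} : x ∈ X ↔ ∀ n, factor x 0 n ∈ langN X := by
  refine ⟨fun hx => factor_mem_langN hx 0, fun h => ?_⟩
  have happrox : ∀ n, ∃ y ∈ X, factor y 0 n = factor x 0 n := by
    simpa only [mem_langN_iff_exists_prefix hX, length_factor] using h
  choose y hy hyx using happrox
  have hlim : Tendsto y atTop (𝓝 x) := tendsto_pi_nhds.2 fun m =>
    tendsto_const_nhds.congr' <| (eventually_gt_atTop m).mono fun n hn => by
      simpa only [Nat.zero_add] using (factor_eq_factor_iff.1 (hyx n) m hn).symm
  exact hXcl.mem_of_tendsto hlim (.of_forall hy)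

theorem isClosed_setOf_forall_factor_mem [DiscreteTopology T] (L : Set (List T)) :
    IsClosed {x : ℕ → T | ∀ n, factor x 0 n ∈ L} := by
  rw [ofPred_forall]
  refine isClosed_iInter fun n => ?_
  have hcont : Continuous fun (x : ℕ → T) (j : Fin n) => x (0 + j) := by fun_prop
  exact (isClosed_discrete {f : Fin n → T | List.ofFn f ∈ L}).preimage hcont

end Languages

section Strategies

variable {S : Type*} {sA : List S → S} {a : ℕ → Bool} {x y : ℕ → S}

/-- The configuration `x` is a possible play with turn order `a` when `A` uses the strategy `sA`:
every letter chosen by `A` is the one prescribed by `sA`. -/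
def Follows (sA : List S → S) (a : ℕ → Bool) (x : ℕ → S) : Prop :=
  ∀ i, a i = false → x i = sA (factor x 0 i)

theorem playPref_eq_factor (sA sB : List S → S) (a : ℕ → Bool) (n : ℕ) :
    playPref sA sB a n = factor (playInf sA sB a) 0 n := by
  induction n with
  | zero => rfl
  | succ n ih => rw [factor_zero_succ', ← ih, playPref, playInf]

theorem follows_playInf (sA sB : List S → S) (a : ℕ → Bool) :
    Follows sA a (playInf sA sB a) := fun i hi => by
  rw [playInf, hi, playPref_eq_factor]
  rfl

theorem playInf_apply_of_turn_eq_true (sA : List S → S) (y : ℕ → S) {i : ℕ} (hi : a i = true) :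
    playInf sA (fun w => y w.length) a i = y i := by
  simp [playInf, hi, playPref_eq_factor]

theorem Follows.factor_eq_factor (hx : Follows sA a x) (hy : Follows sA a y) {n : ℕ}
    (hxy : ∀ i < n, a i = true → x i = y i) : factor x 0 n = factor y 0 n := by
  induction n with
  | zero => rfl
  | succ n ih =>
    have hprefix : factor x 0 n = factor y 0 n := ih fun i hi => hxy i (hi.trans n.lt_succ_self)
    have hlast : x n = y n := by
      cases hturn : a n with
      | false => rw [hx n hturn, hy n hturn, hprefix]
      | true => exact hxy n n.lt_succ_self hturn
    rw [factor_zero_succ', factor_zero_succ', hprefix, hlast]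

theorem Follows.exists_playInf_eq (hx : Follows sA a x) : ∃ sB, playInf sA sB a = x := by
  refine ⟨fun w => x w.length, funext fun n => ?_⟩
  have hprefix := (follows_playInf sA (fun w => x w.length) a).factor_eq_factor hx (n := n + 1)
    fun i _ hi => playInf_apply_of_turn_eq_true sA x hi
  simpa only [Nat.zero_add] using factor_eq_factor_iff.1 hprefix n n.lt_succ_self

theorem Follows.exists_factor_eq_append (hx : Follows sA a x) {n : ℕ} (hn : a n = true) (s : S) :
    ∃ y, Follows sA a y ∧ factor y 0 (n + 1) = factor x 0 n ++ [s] := by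
  let y := playInf sA (fun w => Function.update x n s w.length) a
  have hy : Follows sA a y := follows_playInf _ _ _
  have hyB : ∀ i, a i = true → y i = Function.update x n s i := fun i =>
    playInf_apply_of_turn_eq_true sA (Function.update x n s)
  have hprefix : factor y 0 n = factor x 0 n := hy.factor_eq_factor hx fun i hi hturn => by
    rw [hyB i hturn, Function.update_of_ne hi.ne]
  exact ⟨y, hy, by rw [factor_zero_succ', hprefix, hyB n hn, Function.update_self]⟩

theorem mem_WShift_iff_exists_follows {X : Set (ℕ → S)} :
    a ∈ WShift X ↔ ∃ sA, ∀ x, Follows sA a x → x ∈ X := by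
  refine exists_congr fun sA => ⟨fun h x hx => ?_, fun h sB => h _ (follows_playInf sA sB a)⟩
  obtain ⟨sB, rfl⟩ := hx.exists_playInf_eq
  exact h sB

theorem shiftN_mem_WShift {X : Set (ℕ → S)} (hX : ∀ x ∈ X, shiftN x ∈ X) (ha : a ∈ WShift X) :
    shiftN a ∈ WShift X := by
  obtain ⟨sA, hsA⟩ := mem_WShift_iff_exists_follows.1 ha
  -- `A` plays as if the letter `sA []` had already been written, whichever player wrote it.
  refine mem_WShift_iff_exists_follows.2 ⟨fun w => sA (sA [] :: w), fun x hx => ?_⟩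
  let y : ℕ → S
    | 0 => sA []
    | i + 1 => x i
  have hy : Follows sA a y
    | 0, _ => rfl
    | i + 1, hi => by
      rw [factor_succ, ← factor_shiftN]
      exact hx i hi
  exact hX y (hsA y hy)

end Strategies

section SafetyGames

variable {S Q : Type*} (M : DFA S Q) {a : ℕ → Bool}

/-- The controlled predecessor of `F`: the states from which `A` can ensure that the next state lies
in `F` when `b` is the player to move (`B` is `true`). -/
def controlledPre (b : Bool) (F : Set Q) : Set Q :=
  match b with
  | true => {q | ∀ s, M.step q s ∈ F}
  | false => {q | ∃ s, M.step q s ∈ F}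

/-- The states of `M` from which `A` can force the play with finite turn order `u` to end in an
accepting state. -/
def forcingStates (u : List Bool) : Set Q := u.foldr (controlledPre M) M.accept

/-- The states of `M` from which, at time `n` of the infinite turn order `a`, player `A` wins all
the finite games that stop after finitely many further moves. -/
def limitForcingStates (a : ℕ → Bool) (n : ℕ) : Set Q := ⋂ k, forcingStates M (factor a n k)

theorem controlledPre_mono (b : Bool) : Monotone (controlledPre M b) := by
  intro F G hFG
  cases b with
  | true => exact fun q hq s => hFG (hq s)
  | false => exact fun q ⟨s, hs⟩ => ⟨s, hFG hs⟩

theorem forcingStates_cons (b : Bool) (u : List Bool) :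
    forcingStates M (b :: u) = controlledPre M b (forcingStates M u) :=
  rfl

variable {M}

theorem forcingStates_append_singleton_subset {b : Bool}
    (hclosed : controlledPre M b M.accept ⊆ M.accept) (u : List Bool) :
    forcingStates M (u ++ [b]) ⊆ forcingStates M u := by
  rw [forcingStates, List.foldr_append]
  exact List.foldr_monotone (controlledPre_mono M) u hclosed

theorem forcingStates_subset_append_singleton {b : Bool}
    (hextendable : M.accept ⊆ controlledPre M b M.accept) (u : List Bool) :
    forcingStates M u ⊆ forcingStates M (u ++ [b]) := by
  rw [forcingStates, forcingStates, List.foldr_append]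
  exact List.foldr_monotone (controlledPre_mono M) u hextendable

theorem antitone_forcingStates_factor (hclosed : ∀ b, controlledPre M b M.accept ⊆ M.accept)
    (a : ℕ → Bool) (n : ℕ) : Antitone fun k => forcingStates M (factor a n k) :=
  antitone_nat_of_succ_le fun k => by
    rw [factor_succ']
    exact forcingStates_append_singleton_subset (hclosed _) _

theorem limitForcingStates_subset_controlledPre [Finite Q]
    (hclosed : ∀ b, controlledPre M b M.accept ⊆ M.accept) (a : ℕ → Bool) (n : ℕ) :
    limitForcingStates M a n ⊆ controlledPre M (a n) (limitForcingStates M a (n + 1)) := by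
  have hanti := antitone_forcingStates_factor hclosed a (n + 1)
  obtain ⟨N, hN⟩ := WellFoundedLT.antitone_chain_condition hanti
  have hlimit : forcingStates M (factor a (n + 1) N) ⊆ limitForcingStates M a (n + 1) :=
    subset_iInter fun k => (le_total N k).elim (fun h => (hN k h).le) fun h => hanti h
  calc limitForcingStates M a n
    _ ⊆ forcingStates M (factor a n (N + 1)) := iInter_subset _ _
    _ = controlledPre M (a n) (forcingStates M (factor a (n + 1) N)) := by
      rw [factor_succ, forcingStates_cons]
    _ ⊆ controlledPre M (a n) (limitForcingStates M a (n + 1)) := controlledPre_mono M _ hlimit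

theorem eval_factor_mem_forcingStates {sA : List S → S}
    (hsA : ∀ x, Follows sA a x → ∀ n, M.eval (factor x 0 n) ∈ M.accept) {x : ℕ → S}
    (hx : Follows sA a x) (n k : ℕ) : M.eval (factor x 0 n) ∈ forcingStates M (factor a n k) := by
  induction k generalizing x n with
  | zero => exact hsA x hx n
  | succ k ih =>
    rw [factor_succ, forcingStates_cons]
    cases hturn : a n with
    | false =>
      refine ⟨x n, ?_⟩
      rw [← M.eval_append_singleton, ← factor_zero_succ']
      exact ih hx (n + 1)
    | true =>
      intro s
      obtain ⟨y, hy, hyx⟩ := hx.exists_factor_eq_append hturn s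
      rw [← M.eval_append_singleton, ← hyx]
      exact ih hy (n + 1)

theorem exists_strategy_of_start_mem_limitForcingStates [Finite Q] [Nonempty S]
    (hclosed : ∀ b, controlledPre M b M.accept ⊆ M.accept)
    (hstart : M.start ∈ limitForcingStates M a 0) :
    ∃ sA, ∀ x, Follows sA a x → ∀ n, M.eval (factor x 0 n) ∈ M.accept := by
  let Good (w : List S) (s : S) : Prop :=
    M.step (M.eval w) s ∈ limitForcingStates M a (w.length + 1)
  let sA (w : List S) : S := Classical.epsilon (Good w)
  refine ⟨sA, fun x hx n => ?_⟩
  have hinvariant : M.eval (factor x 0 n) ∈ limitForcingStates M a n := by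
    induction n with
    | zero => exact hstart
    | succ n ih =>
      have hpre := limitForcingStates_subset_controlledPre hclosed a n ih
      rw [factor_zero_succ', M.eval_append_singleton]
      cases hturn : a n with
      | true =>
        rw [hturn] at hpre
        exact hpre (x n)
      | false =>
        rw [hturn] at hpre
        obtain ⟨s, hs⟩ := hpre
        have hgood : Good (factor x 0 n) (sA (factor x 0 n)) :=
          Classical.epsilon_spec ⟨s, by simpa only [Good, length_factor] using hs⟩
        rw [hx n hturn]
        simpa only [Good, length_factor] using hgood
  exact mem_iInter.1 hinvariant 0

theorem exists_strategy_iff_start_mem_forcingStates [Finite Q] [Nonempty S]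
    (hclosed : ∀ b, controlledPre M b M.accept ⊆ M.accept) :
    (∃ sA, ∀ x, Follows sA a x → ∀ n, M.eval (factor x 0 n) ∈ M.accept) ↔
      ∀ n, M.start ∈ forcingStates M (factor a 0 n) := by
  refine ⟨fun ⟨sA, hsA⟩ => ?_, fun h =>
    exists_strategy_of_start_mem_limitForcingStates hclosed (mem_iInter.2 h)⟩
  exact eval_factor_mem_forcingStates hsA (follows_playInf sA sA a) 0

variable (M) in
theorem isRegular_setOf_start_mem_forcingStates [Finite Q] :
    Language.IsRegular ({u | M.start ∈ forcingStates M u} : Language Bool) := by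
  let N : DFA Bool (Set Q) :=
    { step := fun F b => controlledPre M b F
      start := M.accept
      accept := {F | M.start ∈ F} }
  have hN : N.accepts.reverse = ({u | M.start ∈ forcingStates M u} : Set (List Bool)) := by
    ext u
    rw [Language.mem_reverse, DFA.mem_accepts, DFA.eval, DFA.evalFrom, List.foldl_reverse]
    rfl
  rw [← hN]
  exact (Language.isRegular_iff.2 ⟨Set Q, Fintype.ofFinite _, N, rfl⟩).reverse

end SafetyGames

section ResidualAutomaton

variable {S : Type*} {L : Language S}

-- All states of `L.toDFA` are reachable; in an arbitrary automaton this fails at the others.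
theorem controlledPre_toDFA_accept_subset [Nonempty S] (hL : ∀ w s, w ++ [s] ∈ L → w ∈ L)
    (b : Bool) : controlledPre L.toDFA b L.toDFA.accept ⊆ L.toDFA.accept := by
  have hclosed : ∀ q s, L.toDFA.step q s ∈ L.toDFA.accept → q ∈ L.toDFA.accept := by
    rintro ⟨_, w, rfl⟩ s h
    simpa using hL w s (by simpa using h)
  intro q hq
  cases b with
  | true => exact hclosed q (Classical.arbitrary S) (hq _)
  | false => exact hq.elim (hclosed q)

theorem toDFA_accept_subset_controlledPre_false (hL : ∀ w ∈ L, ∃ s, w ++ [s] ∈ L) :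
    L.toDFA.accept ⊆ controlledPre L.toDFA false L.toDFA.accept := by
  rintro ⟨_, w, rfl⟩ hw
  obtain ⟨s, hs⟩ := hL w (by simpa using hw)
  exact ⟨s, by simpa using hs⟩

end ResidualAutomaton

section WinningShift

variable {S Q : Type*} [Finite Q] [Nonempty S] [TopologicalSpace S] {X : Set (ℕ → S)}
  {M : DFA S Q}

theorem mem_WShift_iff_start_mem_forcingStates (hXcl : IsClosed X)
    (hXsh : ∀ x ∈ X, shiftN x ∈ X) (haccepts : M.accepts = langN X)
    (hclosed : ∀ b, controlledPre M b M.accept ⊆ M.accept) {a : ℕ → Bool} :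
    a ∈ WShift X ↔ ∀ n, M.start ∈ forcingStates M (factor a 0 n) := by
  have hsafe : ∀ x, x ∈ X ↔ ∀ n, M.eval (factor x 0 n) ∈ M.accept := fun x => by
    rw [mem_iff_forall_factor_mem_langN hXcl hXsh, ← haccepts]
    rfl
  simp only [mem_WShift_iff_exists_follows, hsafe,
    exists_strategy_iff_start_mem_forcingStates hclosed]

theorem langN_WShift_eq_setOf_start_mem_forcingStates (hXcl : IsClosed X)
    (hXsh : ∀ x ∈ X, shiftN x ∈ X) (haccepts : M.accepts = langN X)
    (hclosed : ∀ b, controlledPre M b M.accept ⊆ M.accept)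
    (hextendable : M.accept ⊆ controlledPre M false M.accept) :
    langN (WShift X) = {u | M.start ∈ forcingStates M u} := by
  have hmem {a : ℕ → Bool} : a ∈ WShift X ↔ ∀ n, M.start ∈ forcingStates M (factor a 0 n) :=
    mem_WShift_iff_start_mem_forcingStates hXcl hXsh haccepts hclosed
  ext u
  rw [mem_langN_iff_exists_prefix fun _ => shiftN_mem_WShift hXsh]
  constructor
  · rintro ⟨a, ha, hu⟩
    exact hu ▸ hmem.1 ha u.length
  · intro hu
    -- After `u` is exhausted, `A` makes all the moves.
    let a : ℕ → Bool := fun i => u.getD i false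
    have hau : factor a 0 u.length = u := factor_getD u false
    have hlong : ∀ m, M.start ∈ forcingStates M (factor a 0 (u.length + m)) := by
      intro m
      induction m with
      | zero => rwa [Nat.add_zero, hau]
      | succ m ih =>
        have hlast : a (u.length + m) = false := List.getD_eq_default _ _ (Nat.le_add_right ..)
        rw [← Nat.add_assoc, factor_zero_succ', hlast]
        exact forcingStates_subset_append_singleton hextendable _ ih
    have hanti := antitone_forcingStates_factor hclosed a 0
    exact ⟨a, hmem.2 fun n => hanti (Nat.le_add_left n u.length) (hlong n), hau⟩

end WinningShift

theorem winningShift_sofic_general {S : Type*} [Nonempty S] [TopologicalSpace S]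
    (X : Set (ℕ → S)) (hXcl : IsClosed X) (hXsh : ∀ x ∈ X, shiftN x ∈ X)
    (hreg : Language.IsRegular (langN X : Language S)) :
    IsClosed (WShift X) ∧ (∀ a ∈ WShift X, shiftN a ∈ WShift X) ∧
      Language.IsRegular (langN (WShift X) : Language Bool) := by
  let L : Language S := langN X
  have : Finite (range L.leftQuotient) := hreg.finite_range_leftQuotient
  have haccepts : L.toDFA.accepts = langN X := L.accepts_toDFA
  have hclosed := controlledPre_toDFA_accept_subset (L := L) fun _ _ =>
    mem_langN_of_append_singleton
  have hextendable := toDFA_accept_subset_controlledPre_false (L := L) fun _ =>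
    exists_append_singleton_mem_langN
  refine ⟨?_, fun _ => shiftN_mem_WShift hXsh, ?_⟩
  · have hW : WShift X = {a | ∀ n, factor a 0 n ∈ {u | L.toDFA.start ∈ forcingStates L.toDFA u}} :=
      ext fun _ => mem_WShift_iff_start_mem_forcingStates hXcl hXsh haccepts hclosed
    exact hW ▸ isClosed_setOf_forall_factor_mem _
  · rw [langN_WShift_eq_setOf_start_mem_forcingStates hXcl hXsh haccepts hclosed hextendable]
    exact isRegular_setOf_start_mem_forcingStates L.toDFA

/-- If `X ⊆ S^ℕ` is a sofic shift (a subshift whose language is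
regular), then the winning shift `W(X)` is a sofic shift: it is a subshift over
`{A,B}` and its language is regular. -/
theorem winningShift_sofic {S : Type*} [Fintype S] [Nonempty S]
    [TopologicalSpace S] [DiscreteTopology S]
    (X : Set (ℕ → S)) (hXcl : IsClosed X) (hXsh : ∀ x ∈ X, shiftN x ∈ X)
    (hreg : Language.IsRegular (langN X : Language S)) :
    IsClosed (WShift X) ∧ (∀ a ∈ WShift X, shiftN a ∈ WShift X) ∧
      Language.IsRegular (langN (WShift X) : Language Bool) :=
  winningShift_sofic_general X hXcl hXsh hreg
end

section
/- Let X ⊆ {A,B}^ℕ be a one-directional subshift over the two-letter alphabet {A,B}, ordered by A < B, which is downward closed (if x ∈ X and y ∈ {A,B}^ℕ satisfies y_i ≤ x_i for all i, then y ∈ X). Then W(X) = X. -/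
/-!
If `A` always plays the least letter `⊥`, the play stays below the word with `⊤` on the turns of `B`
and `⊥` on the turns of `A`; if `B` always plays the greatest letter `⊤`, it stays above that word.
So membership of this one word decides the game for a lower set, and over `{A, B}` the word is the
turn order itself.
-/

section ExtremalWord

variable {S : Type*}

/-- The word with letter `⊤` on the turns of `B` and `⊥` on the turns of `A`: the play in which
`A` always chooses `⊥` and `B` always chooses `⊤`. -/
def extremalWord [Bot S] [Top S] (a : ℕ → Bool) (i : ℕ) : S :=
  if a i then ⊤ else ⊥

theorem extremalWord_bool : (extremalWord : (ℕ → Bool) → ℕ → Bool) = id := by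
  ext a i
  simp [extremalWord]

variable [LE S] [BoundedOrder S]

theorem playInf_const_bot_le_extremalWord (sB : List S → S) (a : ℕ → Bool) :
    playInf (fun _ => ⊥) sB a ≤ extremalWord a := by
  intro i
  cases h : a i <;> simp [playInf, extremalWord, h]

theorem extremalWord_le_playInf_const_top (sA : List S → S) (a : ℕ → Bool) :
    extremalWord a ≤ playInf sA (fun _ => ⊤) a := by
  intro i
  cases h : a i <;> simp [playInf, extremalWord, h]

theorem winningShift_of_downwardClosed_general {X : Set (ℕ → S)} (hX : IsLowerSet X) :
    WShift X = extremalWord ⁻¹' X := by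
  ext a
  constructor
  · rintro ⟨sA, hsA⟩
    exact hX (extremalWord_le_playInf_const_top sA a) (hsA fun _ => ⊤)
  · intro ha
    exact ⟨fun _ => ⊥, fun sB => hX (playInf_const_bot_le_extremalWord sB a) ha⟩

end ExtremalWord

/-- If `X ⊆ {A,B}^ℕ` is a downward closed one-directional subshift
over the two-letter alphabet `{A,B}` (with `A = false < true = B`), then `W(X) = X`. -/
theorem winningShift_of_downwardClosed (X : Set (ℕ → Bool))
    (hXcl : IsClosed X) (hXsh : ∀ x ∈ X, shiftN x ∈ X)
    (hdown : ∀ x ∈ X, ∀ y : ℕ → Bool, (∀ i, y i ≤ x i) → y ∈ X) :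
    WShift X = X := by
  have hX : IsLowerSet X := fun x y hyx hx => hdown x hx y hyx
  rw [winningShift_of_downwardClosed_general hX, extremalWord_bool, Set.preimage_id]
end

section
/- Let X ⊆ S^ℕ and Y ⊆ R^ℕ be one-directional subshifts over finite alphabets S and R, and let X × Y ⊆ (S × R)^ℕ denote the product subshift {z : (i ↦ z_i.1) ∈ X and (i ↦ z_i.2) ∈ Y}. Then W(X × Y) = W(X) ∩ W(Y). -/
/-!
A word follows a strategy of `A` when it agrees with it at every turn of `A`; these words are
exactly the plays of the strategy, so `a ∈ W(X)` means that some strategy has all the words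
following it in `X`. A pair of winning strategies for `X` and `Y`, played coordinatewise, wins for
`X × Y`. Conversely, given a winning strategy for `X × Y`, player `A` wins for `X` by maintaining an
imaginary play of the product game, filling in the second coordinate on behalf of `B`. The second
argument works for any surjective letter map in place of the projections.
-/

open Function Set

section Plays

variable {S : Type*} {sA sB : List S → S} {a : ℕ → Bool} {x : ℕ → S} {X : Set (ℕ → S)}

theorem playPref_eq_map_range (sA sB : List S → S) (a : ℕ → Bool) (n : ℕ) :
    playPref sA sB a n = (List.range n).map (playInf sA sB a) := by
  induction n with
  | zero => rfl
  | succ n ih => rw [List.range_succ, List.map_append, ← ih]; rfl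

theorem playInf_eq_iff :
    playInf sA sB a = x ↔ ∀ i, x i = (if a i then sB else sA) ((List.range i).map x) := by
  constructor
  · rintro rfl i
    rw [← playPref_eq_map_range]
    rfl
  · intro hx
    have prefix_eq (n : ℕ) : playPref sA sB a n = (List.range n).map x := by
      induction n with
      | zero => rfl
      | succ n ih => rw [playPref, ih, ← hx, List.range_succ, List.map_append, List.map_singleton]
    funext i
    rw [playInf, prefix_eq, ← hx]

/-- The infinite word `x` follows the strategy `s` of player `A` in the turn order `a`: each letter
at a turn of `A` is the one prescribed by `s`. The prefix `x_0 ⋯ x_{i-1}` is written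
`(List.range i).map x`. -/
def FollowsStrategy (s : List S → S) (a : ℕ → Bool) (x : ℕ → S) : Prop :=
  ∀ i, a i = false → x i = s ((List.range i).map x)

theorem followsStrategy_iff_exists_playInf_eq :
    FollowsStrategy sA a x ↔ ∃ sB, playInf sA sB a = x := by
  simp only [playInf_eq_iff]
  constructor
  · intro hx
    -- `B` reproduces `x` by reading off the position from the length of the current prefix.
    refine ⟨fun w => x w.length, fun i => ?_⟩
    cases hi : a i
    · simpa using hx i hi
    · simp
  · rintro ⟨sB, hx⟩ i hi
    simpa [hi] using hx i

theorem mem_WShift_iff_exists_followsStrategy :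
    a ∈ WShift X ↔ ∃ s, ∀ x, FollowsStrategy s a x → x ∈ X := by
  simp only [WShift, mem_ofPred_eq, followsStrategy_iff_exists_playInf_eq, forall_exists_index,
    forall_apply_eq_imp_iff]

end Plays

section Transduction

variable {S T : Type*}

/-- The output word of a sequential transducer: `φ u x` is the letter written on reading `x` when
`u` has been written so far. It turns a word of the game over `S` into an imaginary play over
`T`. -/
def transduce (φ : List T → S → T) (w : List S) : List T :=
  w.foldl (fun u x => u ++ [φ u x]) []

/-- The output of the transducer `φ` on an infinite input word. -/
def transduceInf (φ : List T → S → T) (x : ℕ → S) (i : ℕ) : T :=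
  φ (transduce φ ((List.range i).map x)) (x i)

theorem map_range_transduceInf (φ : List T → S → T) (x : ℕ → S) (n : ℕ) :
    (List.range n).map (transduceInf φ x) = transduce φ ((List.range n).map x) := by
  induction n with
  | zero => rfl
  | succ n ih => simp [List.range_succ, ih, transduceInf, transduce, List.foldl_append]

end Transduction

section LetterMaps

variable {S T : Type*} {a : ℕ → Bool} {f : T → S}

theorem FollowsStrategy.comp {s : List T → T} {s' : List S → S} {z : ℕ → T}
    (hz : FollowsStrategy s a z) (hs : ∀ w, f (s w) = s' (w.map f)) :
    FollowsStrategy s' a (f ∘ z) := by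
  intro i hi
  rw [comp_apply, hz i hi, hs, List.map_map]

theorem followsStrategy_transduceInf {s : List T → T} {φ : List T → S → T} {x : ℕ → S}
    (hφ : ∀ u, φ u (f (s u)) = s u) (hx : FollowsStrategy (fun w => f (s (transduce φ w))) a x) :
    FollowsStrategy s a (transduceInf φ x) := by
  intro i hi
  rw [map_range_transduceInf, transduceInf, hx i hi, hφ]

theorem WShift_subset_of_mapsTo {Z : Set (ℕ → T)} {X : Set (ℕ → S)} (hf : Surjective f)
    (hZX : MapsTo (f ∘ ·) Z X) : WShift Z ⊆ WShift X := by
  classical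
  intro a ha
  rw [mem_WShift_iff_exists_followsStrategy] at ha ⊢
  obtain ⟨s, hs⟩ := ha
  -- Lift a letter to the answer of `s` whenever that is possible, and arbitrarily otherwise.
  let φ (u : List T) : S → T := update (surjInv hf) (f (s u)) (s u)
  have lift_strategy (u : List T) : φ u (f (s u)) = s u := update_self ..
  have map_lift (u : List T) (x : S) : f (φ u x) = x := by
    by_cases hx : x = f (s u)
    · rw [hx, lift_strategy]
    · exact (congrArg f (update_of_ne hx ..)).trans (surjInv_eq hf x)
  refine ⟨fun w => f (s (transduce φ w)), fun x hx => ?_⟩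
  have comp_lift : f ∘ transduceInf φ x = x := funext fun i => map_lift _ (x i)
  exact comp_lift ▸ hZX (hs _ (followsStrategy_transduceInf lift_strategy hx))

end LetterMaps

section Product

variable {S R : Type*} (X : Set (ℕ → S)) (Y : Set (ℕ → R))

theorem WShift_prod_subset :
    WShift {z : ℕ → S × R | (fun i => (z i).1) ∈ X ∧ (fun i => (z i).2) ∈ Y} ⊆
      WShift X ∩ WShift Y := by
  rintro a ⟨s, hs⟩
  have : Nonempty S := ⟨(s []).1⟩
  have : Nonempty R := ⟨(s []).2⟩
  exact ⟨WShift_subset_of_mapsTo Prod.fst_surjective (fun _ hz => hz.1) ⟨s, hs⟩,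
    WShift_subset_of_mapsTo Prod.snd_surjective (fun _ hz => hz.2) ⟨s, hs⟩⟩

theorem WShift_inter_subset_prod :
    WShift X ∩ WShift Y ⊆
      WShift {z : ℕ → S × R | (fun i => (z i).1) ∈ X ∧ (fun i => (z i).2) ∈ Y} := by
  rintro a ⟨hX, hY⟩
  rw [mem_WShift_iff_exists_followsStrategy] at hX hY ⊢
  obtain ⟨s, hs⟩ := hX
  obtain ⟨t, ht⟩ := hY
  exact ⟨fun w => (s (w.map Prod.fst), t (w.map Prod.snd)), fun z hz =>
    ⟨hs _ (hz.comp fun _ => rfl), ht _ (hz.comp fun _ => rfl)⟩⟩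

theorem winningShift_prod_general :
    WShift {z : ℕ → S × R | (fun i => (z i).1) ∈ X ∧ (fun i => (z i).2) ∈ Y} =
      WShift X ∩ WShift Y :=
  (WShift_prod_subset X Y).antisymm (WShift_inter_subset_prod X Y)

end Product

/-- For one-directional subshifts `X ⊆ S^ℕ` and `Y ⊆ R^ℕ`,
the winning shift of the product subshift `X × Y ⊆ (S × R)^ℕ` is
`W(X × Y) = W(X) ∩ W(Y)`. -/
theorem winningShift_prod {S R : Type*} [Fintype S] [Nonempty S] [Fintype R] [Nonempty R]
    [TopologicalSpace S] [DiscreteTopology S] [TopologicalSpace R] [DiscreteTopology R]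
    (X : Set (ℕ → S)) (Y : Set (ℕ → R))
    (hXcl : IsClosed X) (hXsh : ∀ x ∈ X, shiftN x ∈ X)
    (hYcl : IsClosed Y) (hYsh : ∀ y ∈ Y, shiftN y ∈ Y) :
    WShift {z : ℕ → S × R | (fun i => (z i).1) ∈ X ∧ (fun i => (z i).2) ∈ Y} =
      WShift X ∩ WShift Y :=
  winningShift_prod_general X Y
end

section
/- Let X ⊆ S^ℤ be a two-directional subshift of finite type (there is a finite set F of forbidden words such that X consists exactly of the configurations in which no word of F occurs). If X is mixing (for all u,w ∈ B(X) there exists N such that for all n ≥ N there is v ∈ S^n with uvw ∈ B(X)), then the winning shift W(X) is mixing. If X is transitive (for all u,w ∈ B(X) there exists v ∈ S* with uvw ∈ B(X)), then W(X) is transitive. -/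
/-- The shift map on two-directional configurations. -/
def shiftZ {S : Type*} (x : ℤ → S) : ℤ → S := fun i => x (i + 1)

/-- `occursZ w x` means that the finite word `w` occurs as a factor of the
two-directional configuration `x`. -/
def occursZ {S : Type*} (w : List S) (x : ℤ → S) : Prop :=
  ∃ i : ℤ, w = List.ofFn fun j : Fin w.length => x (i + j.val)

/-- The language `B(X)` of a set of two-directional configurations. -/
def langZ {S : Type*} (X : Set (ℤ → S)) : Set (List S) :=
  { w | ∃ x ∈ X, occursZ w x }

/-- The winning shift of a two-directional subshift `X`: all configurations in
`{A,B}^ℤ` whose every finite factor lies in the winning set `W(B(X))`. -/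
def WShiftZ {S : Type*} (X : Set (ℤ → S)) : Set (ℤ → Bool) :=
  { a | ∀ w : List Bool, occursZ w a → w ∈ Wset (langZ X) }

/-- A language is mixing if any two of its words can be glued with a connecting word
of any sufficiently large length. -/
def MixingLang {S : Type*} (L : Set (List S)) : Prop :=
  ∀ u ∈ L, ∀ w ∈ L, ∃ N : ℕ, ∀ n ≥ N, ∃ v : List S, v.length = n ∧ u ++ v ++ w ∈ L

/-- A language is transitive if any two of its words can be glued with some
connecting word. -/
def TransitiveLang {S : Type*} (L : Set (List S)) : Prop :=
  ∀ u ∈ L, ∀ w ∈ L, ∃ v : List S, u ++ v ++ w ∈ L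

/-!
By backward induction, `A` wins with turn order `a` iff the empty word is a winning position.
If `X` is `k`-step, a word `u` belongs to `B(W(X))` iff `A` wins the game with turn order `u`
started from some word `q` of length `k`. Given two such words `u`, `w` with starting words
`q`, `p`, let `A` play `u` from `q`, use a block of turns belonging to `A` to steer the game to
`p`, and then play `w` from `p`. The length of this block must not depend on the word `y` played
during `u`. If `X` is mixing, every large length works for the finitely many `y`. If `X` is
transitive, every `y` lies on a loop at `q`, and following the loop of `y` by the loops of all the
other words gives a loop whose length is the same for every `y`.
-/

namespace WordGame

variable {S : Type*} {L T : Set (List S)} {X : Set (ℤ → S)} {k : ℕ}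

section Games

/-- The positions (words already played) from which `A` can force the final word into the target
`T` when the remaining turn order is `a`, computed by backward induction on `a`. -/
def winningPositions (T : Set (List S)) : List Bool → Set (List S)
  | [] => T
  | false :: a => {p | ∃ s, p ++ [s] ∈ winningPositions T a}
  | true :: a => {p | ∀ s, p ++ [s] ∈ winningPositions T a}

lemma winningPositions_append (T : Set (List S)) (a b : List Bool) :
    winningPositions T (a ++ b) = winningPositions (winningPositions T b) a := by
  induction a with
  | nil => rfl
  | cons c a ih => cases c <;> simp only [List.cons_append, winningPositions, ih]

lemma mem_winningPositions_of_imp {T T' : Set (List S)} {a : List Bool} {p p' : List S}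
    (hp : p ∈ winningPositions T a)
    (h : ∀ y : List S, y.length = a.length → p ++ y ∈ T → p' ++ y ∈ T') :
    p' ∈ winningPositions T' a := by
  induction a generalizing p p' with
  | nil => simpa [winningPositions] using h [] rfl (by simpa [winningPositions] using hp)
  | cons c a ih =>
    have move (s : S) (hs : p ++ [s] ∈ winningPositions T a) :
        p' ++ [s] ∈ winningPositions T' a :=
      ih hs fun y hy hT => by simpa using h (s :: y) (by simp [hy]) (by simpa using hT)
    cases c with
    | false => exact hp.imp move
    | true => exact fun s => move s (hp s)

lemma mem_winningPositions_replicate {n : ℕ} {p : List S} :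
    p ∈ winningPositions T (List.replicate n false) ↔
      ∃ v : List S, v.length = n ∧ p ++ v ∈ T := by
  induction n generalizing p with
  | zero => simp [winningPositions]
  | succ n ih =>
    simp only [List.replicate_succ, winningPositions, Set.mem_ofPred_eq, ih]
    constructor
    · rintro ⟨s, v, hv, h⟩
      exact ⟨s :: v, by simp [hv], by simpa using h⟩
    · rintro ⟨_ | ⟨s, v⟩, hv, h⟩
      · simp at hv
      · exact ⟨s, v, by simpa using hv, by simpa using h⟩

lemma exists_append_mem_of_mem_winningPositions [Nonempty S] {a : List Bool} {p : List S}
    (hp : p ∈ winningPositions T a) : ∃ v : List S, v.length = a.length ∧ p ++ v ∈ T := by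
  induction a generalizing p with
  | nil => exact ⟨[], rfl, by simpa [winningPositions] using hp⟩
  | cons c a ih =>
    obtain ⟨s, hs⟩ : ∃ s, p ++ [s] ∈ winningPositions T a := by
      cases c with
      | false => exact hp
      | true => exact ⟨Classical.arbitrary S, hp _⟩
    obtain ⟨v, hva, hv⟩ := ih hs
    exact ⟨s :: v, by simp [hva], by simpa using hv⟩

lemma playAux_congr {sA sA' sB sB' : List S → S} {p : List S}
    (hA : ∀ r, sA (p ++ r) = sA' (p ++ r)) (hB : ∀ r, sB (p ++ r) = sB' (p ++ r))
    (a : List Bool) : playAux sA sB a p = playAux sA' sB' a p := by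
  induction a generalizing p with
  | nil => rfl
  | cons c a ih =>
    have hmove : (if c then sB else sA) p = (if c then sB' else sA') p := by
      cases c
      · simpa using hA []
      · simpa using hB []
    simp only [playAux, hmove]
    exact ih (fun r => by simpa using hA (_ :: r)) (fun r => by simpa using hB (_ :: r))

lemma mem_winningPositions_iff_exists_strategy [Nonempty S] {a : List Bool} {p : List S} :
    p ∈ winningPositions T a ↔ ∃ sA : List S → S, ∀ sB, playAux sA sB a p ∈ T := by
  classical
  have update_apply (f : List S → S) (p : List S) (s t : S) (r : List S) :
      Function.update f p s (p ++ [t] ++ r) = f (p ++ [t] ++ r) :=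
    Function.update_of_ne (by simp) _ _
  induction a generalizing p with
  | nil => simp [winningPositions, playAux]
  | cons c a ih =>
    cases c with
    | false =>
      constructor
      · rintro ⟨s, hs⟩
        obtain ⟨sA, hA⟩ := ih.1 hs
        refine ⟨Function.update sA p s, fun sB => ?_⟩
        simp only [playAux, Bool.false_eq_true, if_false, Function.update_self]
        rw [playAux_congr (update_apply sA p s s) (fun _ => rfl)]
        exact hA sB
      · rintro ⟨sA, hA⟩
        exact ⟨sA p, ih.2 ⟨sA, hA⟩⟩
    | true =>
      constructor
      · intro hp
        choose sA hA using fun s => ih.1 (hp s)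
        -- `A` reads off the move of `B` at the position `p` and follows the matching strategy.
        refine ⟨fun q => sA (q.getD p.length (Classical.arbitrary S)) q, fun sB => ?_⟩
        simp only [playAux, if_true]
        rw [playAux_congr (sA' := sA (sB p)) (fun r => by simp) (fun _ => rfl)]
        exact hA _ sB
      · rintro ⟨sA, hA⟩ s
        refine ih.2 ⟨sA, fun sB => ?_⟩
        rw [← playAux_congr (fun _ => rfl) (update_apply sB p s s)]
        simpa [playAux] using hA (Function.update sB p s)

lemma mem_wset_iff [Nonempty S] {a : List Bool} : a ∈ Wset T ↔ [] ∈ winningPositions T a :=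
  mem_winningPositions_iff_exists_strategy.symm

/-- A language is closed under taking factors. -/
def FactorClosed {α : Type*} (L : Set (List α)) : Prop :=
  ∀ ⦃u v : List α⦄, u <:+: v → v ∈ L → u ∈ L

lemma FactorClosed.mem_of_mem_winningPositions [Nonempty S] (hL : FactorClosed L)
    {a : List Bool} {p : List S} (hp : p ∈ winningPositions L a) : p ∈ L := by
  obtain ⟨v, -, hv⟩ := exists_append_mem_of_mem_winningPositions hp
  exact hL (List.prefix_append p v).isInfix hv

lemma FactorClosed.wset [Nonempty S] (hL : FactorClosed L) : FactorClosed (Wset L) := by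
  rintro a _ ⟨s, t, rfl⟩ h
  rw [mem_wset_iff, List.append_assoc, winningPositions_append] at h
  obtain ⟨q, -, hq⟩ := exists_append_mem_of_mem_winningPositions h
  rw [winningPositions_append] at hq
  exact mem_wset_iff.2 <| mem_winningPositions_of_imp hq fun y _ hy =>
    hL (List.suffix_append _ y).isInfix (hL.mem_of_mem_winningPositions hy)

end Games

section Factors

/-- The factor of length `n` of the configuration `x` that starts at the coordinate `i`. -/
def factor (x : ℤ → S) (i : ℤ) (n : ℕ) : List S := List.ofFn fun j : Fin n => x (i + j.val)

@[simp] lemma length_factor (x : ℤ → S) (i : ℤ) (n : ℕ) : (factor x i n).length = n := by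
  simp [factor]

lemma factor_add (x : ℤ → S) (i : ℤ) (m n : ℕ) :
    factor x i (m + n) = factor x i m ++ factor x (i + m) n := by
  simp [factor, List.ofFn_add, add_assoc]

lemma factor_eq_factor_iff {x y : ℤ → S} {i j : ℤ} {n : ℕ} :
    factor x i n = factor y j n ↔ ∀ t < n, x (i + t) = y (j + t) := by
  simp [factor, List.ofFn_inj, funext_iff, Fin.forall_iff]

lemma factor_eq_append_iff {x : ℤ → S} {i : ℤ} {u v : List S} :
    factor x i (u ++ v).length = u ++ v ↔
      factor x i u.length = u ∧ factor x (i + u.length) v.length = v := by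
  rw [List.length_append, factor_add]
  exact ⟨fun h => List.append_inj h (length_factor ..), fun ⟨hu, hv⟩ => by rw [hu, hv]⟩

lemma factor_comp_add_right (x : ℤ → S) (m i : ℤ) (n : ℕ) :
    factor (fun z => x (z + m)) i n = factor x (i + m) n := by
  simp [factor, add_right_comm]

lemma factor_isInfix_factor (x : ℤ → S) {i i' : ℤ} {n n' : ℕ} (hi : i' ≤ i)
    (hn : i + n ≤ i' + n') : factor x i n <:+: factor x i' n' := by
  obtain ⟨s, rfl⟩ := Int.le.dest hi
  obtain ⟨t, rfl⟩ : ∃ t, n' = s + n + t := Nat.exists_eq_add_of_le (by omega)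
  exact ⟨factor x i' s, factor x (i' + ↑(s + n)) t, by rw [factor_add, factor_add]⟩

lemma occursZ_iff_factor {w : List S} {x : ℤ → S} :
    occursZ w x ↔ ∃ i, factor x i w.length = w :=
  exists_congr fun _ => eq_comm

lemma occursZ_factor (x : ℤ → S) (i : ℤ) (n : ℕ) : occursZ (factor x i n) x :=
  occursZ_iff_factor.2 ⟨i, by rw [length_factor]⟩

lemma mem_langZ_iff_factor {w : List S} :
    w ∈ langZ X ↔ ∃ x ∈ X, ∃ i, factor x i w.length = w := by
  simp only [langZ, Set.mem_ofPred_eq, occursZ_iff_factor]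

lemma factor_mem_langZ {x : ℤ → S} (hx : x ∈ X) (i : ℤ) (n : ℕ) : factor x i n ∈ langZ X :=
  ⟨x, hx, occursZ_factor x i n⟩

lemma factorClosed_langZ (X : Set (ℤ → S)) : FactorClosed (langZ X) := by
  rintro u _ ⟨s, t, rfl⟩ h
  obtain ⟨x, hx, i, h⟩ := mem_langZ_iff_factor.1 h
  exact mem_langZ_iff_factor.2
    ⟨x, hx, _, (factor_eq_append_iff.1 (factor_eq_append_iff.1 h).1).2⟩

lemma exists_append_mem_langZ {u : List S} (hu : u ∈ langZ X) (n : ℕ) :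
    ∃ v : List S, v.length = n ∧ u ++ v ∈ langZ X := by
  obtain ⟨x, hx, i, hi⟩ := mem_langZ_iff_factor.1 hu
  refine ⟨factor x (i + u.length) n, length_factor .., ?_⟩
  simpa only [factor_add, hi] using factor_mem_langZ hx i (u.length + n)

lemma exists_append_left_mem_langZ {u : List S} (hu : u ∈ langZ X) (n : ℕ) :
    ∃ v : List S, v.length = n ∧ v ++ u ∈ langZ X := by
  obtain ⟨x, hx, i, hi⟩ := mem_langZ_iff_factor.1 hu
  refine ⟨factor x (i - n) n, length_factor .., ?_⟩
  simpa only [factor_add, sub_add_cancel, hi] using factor_mem_langZ hx (i - n) (n + u.length)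

end Factors

section FiniteType

/-- The subshift of all configurations in which no word of `F` occurs. -/
def avoiding (F : Set (List S)) : Set (ℤ → S) := {x | ∀ w ∈ F, ¬ occursZ w x}

/-- A language is `k`-step if words that overlap in at least `k` letters can be glued along the
overlap; the languages of `k`-step subshifts of finite type have this property. -/
def StepLang (L : Set (List S)) (k : ℕ) : Prop :=
  ∀ x p y : List S, k ≤ p.length → x ++ p ∈ L → p ++ y ∈ L → x ++ p ++ y ∈ L

lemma mem_avoiding_comp_add_right {F : Set (List S)} {x : ℤ → S} (hx : x ∈ avoiding F) (m : ℤ) :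
    (fun z => x (z + m)) ∈ avoiding F := by
  intro w hw hocc
  obtain ⟨i, hi⟩ := occursZ_iff_factor.1 hocc
  rw [factor_comp_add_right] at hi
  exact hx w hw (occursZ_iff_factor.2 ⟨i + m, hi⟩)

lemma append_mem_langZ_avoiding_iff {F : Set (List S)} {u v : List S} :
    u ++ v ∈ langZ (avoiding F) ↔
      ∃ x ∈ avoiding F, factor x (-u.length) u.length = u ∧ factor x 0 v.length = v := by
  constructor
  · intro h
    obtain ⟨x, hx, i, hi⟩ := mem_langZ_iff_factor.1 h
    obtain ⟨hu, hv⟩ := factor_eq_append_iff.1 hi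
    refine ⟨_, mem_avoiding_comp_add_right hx (i + u.length), ?_, ?_⟩
    · rwa [factor_comp_add_right, neg_add_cancel_comm_assoc]
    · rwa [factor_comp_add_right, zero_add]
  · rintro ⟨x, hx, hu, hv⟩
    exact mem_langZ_iff_factor.2
      ⟨x, hx, -u.length, factor_eq_append_iff.2 ⟨hu, by rwa [neg_add_cancel]⟩⟩

lemma exists_mem_avoiding_splice {F : Set (List S)} {m : ℕ} (hF : ∀ w ∈ F, w.length ≤ m)
    {c d : ℤ → S} (hc : c ∈ avoiding F) (hd : d ∈ avoiding F)
    (hcd : factor c 0 m = factor d 0 m) :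
    ∃ e ∈ avoiding F, (∀ z < (m : ℤ), e z = c z) ∧ ∀ z ≥ 0, e z = d z := by
  let e : ℤ → S := fun z => if z < m then c z else d z
  have he_left : ∀ z < (m : ℤ), e z = c z := fun z hz => if_pos hz
  have he_right : ∀ z ≥ 0, e z = d z := by
    intro z hz
    lift z to ℕ using hz
    by_cases hzm : (z : ℤ) < m
    · simpa [he_left z hzm] using factor_eq_factor_iff.1 hcd z (by exact_mod_cast hzm)
    · exact if_neg hzm
  refine ⟨e, fun w hw hocc => ?_, he_left, he_right⟩
  obtain ⟨i, hi⟩ := occursZ_iff_factor.1 hocc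
  have hwm := hF w hw
  -- An occurrence of `w` is too short to leave both half-lines.
  rcases le_or_gt 0 i with h0 | h0
  · refine hd w hw (occursZ_iff_factor.2 ⟨i, ?_⟩)
    rw [← hi, length_factor, factor_eq_factor_iff]
    exact fun t _ => (he_right _ (by omega)).symm
  · refine hc w hw (occursZ_iff_factor.2 ⟨i, ?_⟩)
    rw [← hi, length_factor, factor_eq_factor_iff]
    exact fun t ht => (he_left _ (by omega)).symm

lemma stepLang_langZ_avoiding {F : Set (List S)} (hF : ∀ w ∈ F, w.length ≤ k) :
    StepLang (langZ (avoiding F)) k := by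
  intro x p y hp hxp hpy
  obtain ⟨c, hc, hcx, hcp⟩ := append_mem_langZ_avoiding_iff.1 hxp
  obtain ⟨d, hd, -, hdpy⟩ := append_mem_langZ_avoiding_iff (u := []).1 hpy
  have hcd := hcp.trans (factor_eq_append_iff.1 hdpy).1.symm
  obtain ⟨e, he, hec, hed⟩ :=
    exists_mem_avoiding_splice (fun w hw => (hF w hw).trans hp) hc hd hcd
  rw [List.append_assoc]
  refine append_mem_langZ_avoiding_iff.2 ⟨e, he, ?_, ?_⟩
  · exact (factor_eq_factor_iff.2 fun t ht => hec _ (by omega)).trans hcx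
  · exact (factor_eq_factor_iff.2 fun t _ => hed _ (by omega)).trans hdpy

lemma StepLang.append_mem_winningPositions (hL : StepLang L k) {x p : List S} {a : List Bool}
    (hp : k ≤ p.length) (hxp : x ++ p ∈ L) (ha : p ∈ winningPositions L a) :
    x ++ p ∈ winningPositions L a :=
  mem_winningPositions_of_imp ha fun y _ hy => hL x p y hp hxp hy

lemma StepLang.mem_winningPositions_append_replicate_append (hL : StepLang L k)
    {q p : List S} {a b : List Bool} {n : ℕ} (hp : k ≤ p.length)
    (hqa : q ∈ winningPositions L a) (hpb : p ∈ winningPositions L b)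
    (hn : ∀ y : List S, y.length = a.length → q ++ y ∈ L →
      ∃ v : List S, v.length = n ∧ q ++ y ++ v ++ p ∈ L) :
    q ∈ winningPositions L (a ++ List.replicate (n + p.length) false ++ b) := by
  rw [List.append_assoc, winningPositions_append]
  refine mem_winningPositions_of_imp hqa fun y hy hqy => ?_
  obtain ⟨v, hv, hvp⟩ := hn y hy hqy
  rw [winningPositions_append, mem_winningPositions_replicate]
  refine ⟨v ++ p, by simp [hv], ?_⟩
  rw [← List.append_assoc]
  exact hL.append_mem_winningPositions hp hvp hpb

end FiniteType

section WinningShift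

variable [Nonempty S]

lemma append_replicate_false_mem_wset_langZ {a : List Bool} (ha : a ∈ Wset (langZ X)) (n : ℕ) :
    a ++ List.replicate n false ∈ Wset (langZ X) := by
  rw [mem_wset_iff, winningPositions_append]
  exact mem_winningPositions_of_imp (mem_wset_iff.1 ha) fun y _ hy =>
    mem_winningPositions_replicate.2 (exists_append_mem_langZ hy n)

lemma replicate_false_append_mem_wset_langZ {a : List Bool} (ha : a ∈ langZ (WShiftZ X)) (n : ℕ) :
    List.replicate n false ++ a ∈ Wset (langZ X) := by
  obtain ⟨b, rfl, x, hx, hba⟩ := exists_append_left_mem_langZ ha n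
  have h := hx _ hba
  rw [mem_wset_iff, winningPositions_append] at h ⊢
  obtain ⟨v, hv, hva⟩ := exists_append_mem_of_mem_winningPositions h
  exact mem_winningPositions_replicate.2 ⟨v, hv, hva⟩

/-- The configuration that carries the turn order `a` from the coordinate `0` on and gives all
other turns to `A`. -/
def padded (a : List Bool) : ℤ → Bool
  | .ofNat n => a.getD n false
  | .negSucc _ => false

lemma padded_natCast (a : List Bool) (n : ℕ) : padded a n = a.getD n false := rfl

lemma factor_padded (a : List Bool) (m n : ℕ) :
    factor (padded a) (-m) (m + a.length + n) =
      List.replicate m false ++ a ++ List.replicate n false := by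
  have hleft : factor (padded a) (-m) m = List.replicate m false := by
    refine List.ext_getElem (by simp) fun t ht _ => ?_
    obtain ⟨s, hs⟩ : ∃ s : ℕ, -(m : ℤ) + t = Int.negSucc s :=
      Int.eq_negSucc_of_lt_zero (by rw [length_factor] at ht; omega)
    simp [factor, hs, padded]
  have hright : factor (padded a) 0 (a.length + n) = a ++ List.replicate n false := by
    refine List.ext_getElem (by simp) fun t _ _ => ?_
    simp only [factor, List.getElem_ofFn, zero_add, padded_natCast]
    grind
  rw [add_assoc, factor_add, neg_add_cancel, hleft, hright, List.append_assoc]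

lemma mem_langZ_wShiftZ_iff {a : List Bool} :
    a ∈ langZ (WShiftZ X) ↔ ∀ n, List.replicate n false ++ a ∈ Wset (langZ X) := by
  refine ⟨replicate_false_append_mem_wset_langZ, fun ha => ?_⟩
  refine ⟨padded a, fun w hw => ?_, occursZ_iff_factor.2 ⟨0, ?_⟩⟩
  · obtain ⟨i, hi⟩ := occursZ_iff_factor.1 hw
    have hinfix : w <:+: factor (padded a) (-i.natAbs)
        (i.natAbs + a.length + (i.natAbs + w.length)) := by
      rw [← hi, length_factor]
      exact factor_isInfix_factor _ (by omega) (by omega)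
    rw [factor_padded] at hinfix
    exact (factorClosed_langZ X).wset hinfix (append_replicate_false_mem_wset_langZ (ha _) _)
  · simpa using factor_padded a 0 0

lemma StepLang.mem_langZ_wShiftZ_iff (hL : StepLang (langZ X) k) {a : List Bool} :
    a ∈ langZ (WShiftZ X) ↔ ∃ q : List S, q.length = k ∧ q ∈ winningPositions (langZ X) a := by
  have mem_wset_replicate_append (n : ℕ) : List.replicate n false ++ a ∈ Wset (langZ X) ↔
      ∃ q : List S, q.length = n ∧ q ∈ winningPositions (langZ X) a := by
    rw [mem_wset_iff, winningPositions_append, mem_winningPositions_replicate]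
    rfl
  refine ⟨fun ha => (mem_wset_replicate_append k).1 (replicate_false_append_mem_wset_langZ ha k),
    fun ⟨q, hqk, hqa⟩ => WordGame.mem_langZ_wShiftZ_iff.2 fun n => ?_⟩
  have hqL := (factorClosed_langZ X).mem_of_mem_winningPositions hqa
  obtain ⟨z, hzn, hzq⟩ := exists_append_left_mem_langZ hqL n
  have hlong : List.replicate (k + n) false ++ a ∈ Wset (langZ X) :=
    (mem_wset_replicate_append _).2
      ⟨z ++ q, by simp [hzn, hqk, add_comm], hL.append_mem_winningPositions hqk.ge hzq hqa⟩
  rw [List.replicate_add, List.append_assoc] at hlong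
  exact (factorClosed_langZ X).wset (List.suffix_append _ _).isInfix hlong

end WinningShift

section Mixing

lemma exists_uniform_connection_of_mixing [Finite S] (hL : MixingLang L) {p : List S}
    (hp : p ∈ L) (q : List S) (m : ℕ) :
    ∃ N, ∀ n ≥ N, ∀ y : List S, y.length = m → q ++ y ∈ L →
      ∃ v : List S, v.length = n ∧ q ++ y ++ v ++ p ∈ L := by
  refine Filter.eventually_atTop.1 ?_
  refine (Filter.eventually_all_finite (List.finite_length_eq S m)).2 fun y _ => ?_
  refine Filter.eventually_imp_distrib_left.2 fun hy => ?_
  exact Filter.eventually_atTop.2 (hL _ hy p hp)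

theorem mixingLang_langZ_wShiftZ [Finite S] [Nonempty S] (hL : StepLang (langZ X) k)
    (hX : MixingLang (langZ X)) : MixingLang (langZ (WShiftZ X)) := by
  intro a ha b hb
  obtain ⟨q, hqk, hqa⟩ := hL.mem_langZ_wShiftZ_iff.1 ha
  obtain ⟨p, hpk, hpb⟩ := hL.mem_langZ_wShiftZ_iff.1 hb
  have hpL := (factorClosed_langZ X).mem_of_mem_winningPositions hpb
  obtain ⟨N, hN⟩ := exists_uniform_connection_of_mixing hX hpL q a.length
  refine ⟨N + p.length, fun n hn => ?_⟩
  obtain ⟨n, rfl⟩ := Nat.exists_eq_add_of_le' (le_of_add_le_right hn)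
  refine ⟨List.replicate (n + p.length) false, List.length_replicate,
    hL.mem_langZ_wShiftZ_iff.2 ⟨q, hqk, ?_⟩⟩
  exact hL.mem_winningPositions_append_replicate_append hpk.ge hqa hpb (hN n (by omega))

end Mixing

section Transitivity

/-- A loop at `q` in the language `L`: a word which, read after `q`, leads back to `q`. -/
def IsLoop (L : Set (List S)) (q v : List S) : Prop := q ++ v ∈ L ∧ q <:+ q ++ v

lemma IsLoop.append_mem {q v w : List S} (hL : StepLang L q.length) (hv : IsLoop L q v)
    (hw : q ++ w ∈ L) : q ++ v ++ w ∈ L := by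
  obtain ⟨hvL, z, hz⟩ := hv
  rw [← hz] at hvL ⊢
  exact hL z q w le_rfl hvL hw

lemma IsLoop.append {q v w : List S} (hL : StepLang L q.length) (hv : IsLoop L q v)
    (hw : IsLoop L q w) : IsLoop L q (v ++ w) := by
  refine ⟨by simpa using hv.append_mem hL hw.1, ?_⟩
  obtain ⟨z, hz⟩ := hv.2
  rw [← List.append_assoc, ← hz, List.append_assoc]
  exact hw.2.trans (List.suffix_append z _)

/-- The lengths of the loops at `q`; they form a monoid because loops can be concatenated. -/
def loopLengths {q : List S} (hL : StepLang L q.length) (hq : q ∈ L) : AddSubmonoid ℕ where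
  carrier := {n | ∃ v, IsLoop L q v ∧ v.length = n}
  zero_mem' := ⟨[], ⟨by simpa using hq, by simp⟩, rfl⟩
  add_mem' := by
    rintro _ _ ⟨v, hv, rfl⟩ ⟨w, hw, rfl⟩
    exact ⟨v ++ w, hv.append hL hw, List.length_append⟩

lemma exists_uniform_connection_of_transitive [Finite S] (hT : TransitiveLang L)
    {q p : List S} (hL : StepLang L q.length) (hq : q ∈ L) (hp : p ∈ L) (m : ℕ) :
    ∃ n, ∀ y : List S, y.length = m → q ++ y ∈ L →
      ∃ v : List S, v.length = n ∧ q ++ y ++ v ++ p ∈ L := by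
  classical
  have hfin : {y : List S | y.length = m ∧ q ++ y ∈ L}.Finite :=
    (List.finite_length_eq S m).subset fun y hy => hy.1
  choose! r hr using fun y (hy : q ++ y ∈ L) => hT _ hy q hq
  obtain ⟨x, hx⟩ := hT q hq p hp
  let loop (y : List S) : List S := y ++ r y ++ q
  have hloop (y : List S) (hy : y ∈ hfin.toFinset) : IsLoop L q (loop y) :=
    ⟨by simpa [loop] using hr y (hfin.mem_toFinset.1 hy).2, q ++ y ++ r y, by simp [loop]⟩
  refine ⟨∑ y ∈ hfin.toFinset, (loop y).length - m + x.length, fun y hym hyL => ?_⟩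
  have hy : y ∈ hfin.toFinset := hfin.mem_toFinset.2 ⟨hym, hyL⟩
  obtain ⟨h, hh, hlen⟩ : ∑ z ∈ hfin.toFinset.erase y, (loop z).length ∈ loopLengths hL hq :=
    sum_mem fun z hz => ⟨loop z, hloop z (Finset.mem_of_mem_erase hz), rfl⟩
  refine ⟨r y ++ q ++ h ++ x, ?_, ?_⟩
  · rw [← Finset.add_sum_erase _ _ hy, ← hlen]
    simp only [loop, List.length_append]
    omega
  · simpa [loop] using ((hloop y hy).append hL hh).append_mem hL (w := x ++ p) (by simpa using hx)

theorem transitiveLang_langZ_wShiftZ [Finite S] [Nonempty S] (hL : StepLang (langZ X) k)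
    (hX : TransitiveLang (langZ X)) : TransitiveLang (langZ (WShiftZ X)) := by
  intro a ha b hb
  obtain ⟨q, rfl, hqa⟩ := hL.mem_langZ_wShiftZ_iff.1 ha
  obtain ⟨p, hpk, hpb⟩ := hL.mem_langZ_wShiftZ_iff.1 hb
  have hqL := (factorClosed_langZ X).mem_of_mem_winningPositions hqa
  have hpL := (factorClosed_langZ X).mem_of_mem_winningPositions hpb
  obtain ⟨n, hn⟩ := exists_uniform_connection_of_transitive hX hL hqL hpL a.length
  refine ⟨List.replicate (n + p.length) false, hL.mem_langZ_wShiftZ_iff.2 ⟨q, rfl, ?_⟩⟩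
  exact hL.mem_winningPositions_append_replicate_append hpk.ge hqa hpb hn

end Transitivity

end WordGame

/-- Let `X ⊆ S^ℤ` be a two-directional subshift of finite type.
If `X` is mixing then its winning shift `W(X)` is mixing, and if `X` is transitive
then `W(X)` is transitive. -/
theorem winningShift_of_SFT_mixing_transitive {S : Type*} [Fintype S] [Nonempty S]
    (X : Set (ℤ → S))
    (hSFT : ∃ F : Set (List S), F.Finite ∧ X = { x : ℤ → S | ∀ w ∈ F, ¬ occursZ w x }) :
    (MixingLang (langZ X) → MixingLang (langZ (WShiftZ X))) ∧
      (TransitiveLang (langZ X) → TransitiveLang (langZ (WShiftZ X))) := by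
  obtain ⟨F, hF, rfl⟩ := hSFT
  obtain ⟨k, hk⟩ := (hF.image List.length).bddAbove
  have hL : WordGame.StepLang (langZ (WordGame.avoiding F)) k :=
    WordGame.stepLang_langZ_avoiding fun w hw => hk ⟨w, hw, rfl⟩
  exact ⟨WordGame.mixingLang_langZ_wShiftZ hL, WordGame.transitiveLang_langZ_wShiftZ hL⟩
end

section
/- Let τ : {0,1} → {0,1}* be a uniform substitution (|τ(0)| = |τ(1)|) which is primitive (there exists n ∈ ℕ such that for all s, s' ∈ {0,1}, the letter s' occurs in τⁿ(s)), and suppose the two-directional substitution subshift X_τ ⊆ {0,1}^ℤ, whose language is { w : w occurs in τⁿ(s) for some n ∈ ℕ, s ∈ {0,1} }, is aperiodic (no point of X_τ is fixed by σ^p for any p ≥ 1). Then W(X_τ) equals the two-directional subshift of {A,B}^ℤ consisting of all configurations containing at most one occurrence of the letter B. -/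
/-- A substitution `τ : S → S*` extended to words by concatenation. -/
def substWord {S : Type*} (τ : S → List S) (w : List S) : List S := w.flatMap τ

/-- The iterates `τⁿ(s)` of a substitution applied to a single letter. -/
def substIter {S : Type*} (τ : S → List S) : ℕ → S → List S
  | 0, s => [s]
  | n + 1, s => substWord τ (substIter τ n s)

/-- The language of a substitution: all factors of the words `τⁿ(s)`. -/
def substLang {S : Type*} (τ : S → List S) : Set (List S) :=
  { w | ∃ n : ℕ, ∃ s : S, w <:+: substIter τ n s }

/-- The two-directional subshift of a substitution: all configurations whose every
finite factor lies in the language of the substitution. -/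
def substShift {S : Type*} (τ : S → List S) : Set (ℤ → S) :=
  { x | ∀ w : List S, occursZ w x → w ∈ substLang τ }

/-!
A turn order with a single `B` is won by `A` because an aperiodic subshift has words of every length
with two continuations (Morse–Hedlund), and there are only two letters.

For the converse, call a left-infinite word right special if it can be prolonged by two distinct
letters. Along the lengths `ℓᵏ` the factor complexity is at most linear, so there are only finitely
many right special words. If `p` is the longest common prefix of `τ(0)` and `τ(1)`, then
`x ↦ τ(x)p` permutes them. Some power of this map is therefore the identity on them, but iterating
it makes two words with the same last letter agree on ever longer suffixes: a right special word is
determined by its last letter, and there are at most two of them. If `A` could win against two turns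
of `B`, at a fixed distance and after arbitrarily long pasts, then compactness would give a past `x`
such that `x` and its prolongations to the second turn of `B`, one for each first move of `B`, are
right special. These are three words, and they are distinct by aperiodicity.
-/

namespace WordGame

open Function Set

variable {S : Type*}

/-! ### Word games, turn by turn -/

lemma playAux_append (sA sB : List S → S) (a : List Bool) (u w : List S) :
    playAux sA sB a (u ++ w) = u ++ playAux (fun v => sA (u ++ v)) (fun v => sB (u ++ v)) a w := by
  induction a generalizing w with
  | nil => rfl
  | cons b a ih => cases b <;> exact (congrArg _ (List.append_assoc u w _)).trans (ih _)

lemma play_cons (sA sB : List S → S) (b : Bool) (a : List Bool) {c : S}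
    (hc : (if b then sB else sA) [] = c) :
    play sA sB (b :: a) = c :: play (fun v => sA (c :: v)) (fun v => sB (c :: v)) a := by
  subst hc
  exact playAux_append sA sB a [_] []

/-- The strategy that opens with `c` and then follows `s c'`, where `c'` is the first letter
actually played. -/
def openWith (c : S) (s : S → List S → S) : List S → S
  | [] => c
  | c' :: v => s c' v

lemma nil_mem_Wset [Nonempty S] {X : Set (List S)} : [] ∈ Wset X ↔ [] ∈ X :=
  ⟨fun ⟨sA, h⟩ => h sA, fun h => ⟨fun _ => Classical.arbitrary S, fun _ => h⟩⟩

lemma false_cons_mem_Wset {X : Set (List S)} {a : List Bool} :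
    false :: a ∈ Wset X ↔ ∃ c, a ∈ Wset {w | c :: w ∈ X} := by
  constructor
  · rintro ⟨sA, hA⟩
    refine ⟨sA [], fun v => sA (sA [] :: v), fun sB => ?_⟩
    have hplay := hA (openWith (sA []) fun _ => sB)
    rwa [play_cons sA _ false a rfl] at hplay
  · rintro ⟨c, sA, hA⟩
    refine ⟨openWith c fun _ => sA, fun sB => ?_⟩
    rw [play_cons _ sB false a (c := c) rfl]
    exact hA _

lemma true_cons_mem_Wset [Nonempty S] {X : Set (List S)} {a : List Bool} :
    true :: a ∈ Wset X ↔ ∀ c, a ∈ Wset {w | c :: w ∈ X} := by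
  constructor
  · rintro ⟨sA, hA⟩ c
    refine ⟨fun v => sA (c :: v), fun sB => ?_⟩
    have hplay := hA (openWith c fun _ => sB)
    rwa [play_cons sA _ true a (c := c) rfl] at hplay
  · intro h
    choose sA hA using h
    refine ⟨openWith (Classical.arbitrary S) sA, fun sB => ?_⟩
    rw [play_cons _ sB true a rfl]
    exact hA _ _

lemma exists_of_append_mem_Wset [Nonempty S] {X : Set (List S)} {a b : List Bool}
    (h : a ++ b ∈ Wset X) : ∃ v : List S, v.length = a.length ∧ b ∈ Wset {w | v ++ w ∈ X} := by
  induction a generalizing X with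
  | nil => exact ⟨[], rfl, h⟩
  | cons t a ih =>
    obtain ⟨c, hc⟩ : ∃ c, a ++ b ∈ Wset {w | c :: w ∈ X} := by
      cases t
      · exact false_cons_mem_Wset.1 h
      · exact ⟨Classical.arbitrary S, true_cons_mem_Wset.1 h _⟩
    obtain ⟨v, hv, hb⟩ := ih hc
    exact ⟨c :: v, congrArg (· + 1) hv, hb⟩

lemma append_mem_Wset {X : Set (List S)} {a b : List Bool} {v : List S} (ha : true ∉ a)
    (hv : v.length = a.length) (hb : b ∈ Wset {w | v ++ w ∈ X}) : a ++ b ∈ Wset X := by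
  induction a generalizing X v with
  | nil => rwa [List.length_eq_zero_iff.1 hv] at hb
  | cons t a ih =>
    obtain ⟨c, v, rfl⟩ := List.exists_cons_of_length_eq_add_one hv
    simp only [List.mem_cons, not_or, Bool.true_eq, Bool.not_eq_true] at ha
    rw [ha.1, List.cons_append, false_cons_mem_Wset]
    exact ⟨c, ih ha.2 (Nat.succ.inj hv) hb⟩

lemma mem_Wset_of_true_notMem [Nonempty S] {X : Set (List S)} {a : List Bool} {v : List S}
    (ha : true ∉ a) (hv : v.length = a.length) (hX : v ∈ X) : a ∈ Wset X := by
  rw [← List.append_nil a]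
  refine append_mem_Wset ha hv (nil_mem_Wset.2 ?_)
  rwa [mem_ofPred_eq, List.append_nil]

/-! ### Factors of two-sided words -/

/-- The factor of length `n` of the two-sided word `x` that starts at position `i`. -/
def factorZ (x : ℤ → S) (i : ℤ) (n : ℕ) : List S := List.ofFn fun j : Fin n => x (i + j.val)

@[simp]
lemma length_factorZ (x : ℤ → S) (i : ℤ) (n : ℕ) : (factorZ x i n).length = n :=
  List.length_ofFn

lemma factorZ_add (x : ℤ → S) (i : ℤ) (m n : ℕ) :
    factorZ x i (m + n) = factorZ x i m ++ factorZ x (i + m) n := by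
  simp [factorZ, List.ofFn_add, add_assoc]

lemma factorZ_one (x : ℤ → S) (i : ℤ) : factorZ x i 1 = [x i] := by
  simp [factorZ]

lemma mem_factorZ {x : ℤ → S} {i : ℤ} {n : ℕ} {c : S} :
    c ∈ factorZ x i n ↔ ∃ k < n, x (i + (k : ℕ)) = c := by
  simp [factorZ, List.mem_ofFn, Fin.exists_iff]

lemma occursZ_iff {w : List S} {x : ℤ → S} : occursZ w x ↔ ∃ i n, w = factorZ x i n := by
  constructor
  · rintro ⟨i, hw⟩
    exact ⟨i, _, hw⟩
  · rintro ⟨i, n, rfl⟩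
    exact ⟨i, by rw [length_factorZ]; rfl⟩

lemma factorZ_infix (x : ℤ → S) {i j : ℤ} {m n : ℕ} (hstart : j ≤ i) (hend : i + n ≤ j + m) :
    factorZ x i n <:+: factorZ x j m := by
  obtain ⟨a, rfl⟩ := Int.le.dest hstart
  obtain ⟨b, hb⟩ := Int.le.dest hend
  obtain rfl : m = a + n + b := by omega
  rw [factorZ_add, factorZ_add]
  exact List.infix_append _ _ _

lemma factorZ_add_mul_period {x : ℤ → S} {d : ℕ} (hx : Periodic x (d : ℤ)) (i k : ℤ) (n : ℕ) :
    factorZ x (i + k * d) n = factorZ x i n := by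
  unfold factorZ
  congr with j
  rw [add_right_comm]
  exact hx.int_mul k _

/-! ### Languages and their subshifts -/

/-- A language is factorial if it contains all factors of its words. -/
def IsFactorial (L : Set (List S)) : Prop := ∀ ⦃v w : List S⦄, w ∈ L → v <:+: w → v ∈ L

/-- A language is extendable if each of its words can be prolonged by a letter on both sides. -/
def IsExtendable (L : Set (List S)) : Prop := ∀ w ∈ L, ∃ c c', c :: w ++ [c'] ∈ L

/-- The two-directional subshift of all configurations with every finite factor in `L`. -/
def shiftOf (L : Set (List S)) : Set (ℤ → S) := {x | ∀ w, occursZ w x → w ∈ L}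

/-- A set of configurations is aperiodic if it contains no fixed point of a positive power of
the shift. -/
def IsAperiodic (X : Set (ℤ → S)) : Prop := ∀ x ∈ X, ∀ p : ℕ, 0 < p → ¬ Periodic x (p : ℤ)

lemma mem_shiftOf {L : Set (List S)} {x : ℤ → S} : x ∈ shiftOf L ↔ ∀ i n, factorZ x i n ∈ L :=
  ⟨fun hx i n => hx _ (occursZ_iff.2 ⟨i, n, rfl⟩), fun hx w hw => by
    obtain ⟨i, n, rfl⟩ := occursZ_iff.1 hw
    exact hx i n⟩

lemma IsExtendable.exists_append_mem {L : Set (List S)} (hL : IsFactorial L) (hext : IsExtendable L)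
    {w : List S} (hw : w ∈ L) (n : ℕ) : ∃ v : List S, v.length = n ∧ w ++ v ∈ L := by
  induction n with
  | zero => exact ⟨[], rfl, by rwa [List.append_nil]⟩
  | succ n ih =>
    obtain ⟨v, hv, hwv⟩ := ih
    obtain ⟨c, c', hc⟩ := hext _ hwv
    refine ⟨v ++ [c'], by rw [List.length_append, hv]; rfl, hL hc ?_⟩
    rw [List.cons_append, List.append_assoc]
    exact (List.suffix_cons _ _).isInfix

/-- The two-sided word with `w` at positions `0, …, |w| - 1`, continued by `b` to the right and
by `a` to the left. -/
def twoSided (a : ℕ → S) (w : List S) (b : ℕ → S) : ℤ → S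
  | .ofNat k => w.getD k (b (k - w.length))
  | .negSucc k => a k

lemma factorZ_twoSided_zero (a : ℕ → S) (w : List S) (b : ℕ → S) :
    factorZ (twoSided a w b) 0 w.length = w := by
  refine List.ext_getElem (length_factorZ _ _ _) fun k _ hk => ?_
  simp only [factorZ, List.getElem_ofFn, zero_add]
  exact List.getD_eq_getElem _ _ hk

lemma factorZ_twoSided_succ (a : ℕ → S) (w : List S) (b : ℕ → S) (n : ℕ) :
    factorZ (twoSided a w b) (-(n + 1 : ℕ)) (1 + (n + w.length + n) + 1) =
      a n :: factorZ (twoSided a w b) (-n) (n + w.length + n) ++ [b n] := by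
  have hleft : twoSided a w b (-(n + 1 : ℕ)) = a n := rfl
  have hright : twoSided a w b ((w.length + n : ℕ) : ℤ) = b n := by
    refine (List.getD_eq_default _ _ (Nat.le_add_right _ _)).trans ?_
    rw [Nat.add_sub_cancel_left]
  rw [factorZ_add, factorZ_add, factorZ_one, factorZ_one, hleft,
    show (-(n + 1 : ℕ) + (1 : ℕ) : ℤ) = -n by omega,
    show (-(n + 1 : ℕ) + (1 + (n + w.length + n) : ℕ) : ℤ) = (w.length + n : ℕ) by omega, hright]
  rfl

lemma exists_mem_shiftOf_occursZ {L : Set (List S)} (hL : IsFactorial L) (hext : IsExtendable L)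
    {w : List S} (hw : w ∈ L) : ∃ x ∈ shiftOf L, occursZ w x := by
  choose left right hmem using hext
  let grow : ℕ → L := fun n => n.rec ⟨w, hw⟩ fun _ v => ⟨_, hmem v v.2⟩
  let x := twoSided (fun n => left (grow n).1 (grow n).2) w (fun n => right (grow n).1 (grow n).2)
  have hgrow : ∀ n : ℕ, factorZ x (-n) (n + w.length + n) = (grow n).1 := by
    intro n
    induction n with
    | zero => simpa [grow] using factorZ_twoSided_zero _ w _
    | succ n ih =>
      rw [show n + 1 + w.length + (n + 1) = 1 + (n + w.length + n) + 1 by omega]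
      refine (factorZ_twoSided_succ _ w _ n).trans ?_
      rw [ih]
  refine ⟨x, mem_shiftOf.2 fun i n => ?_, occursZ_iff.2 ⟨0, w.length, ?_⟩⟩
  · refine hL (grow (i.natAbs + n)).2 ?_
    rw [← hgrow]
    exact factorZ_infix x (by omega) (by omega)
  · exact (factorZ_twoSided_zero _ w _).symm

lemma langZ_shiftOf {L : Set (List S)} (hL : IsFactorial L) (hext : IsExtendable L) :
    langZ (shiftOf L) = L :=
  Subset.antisymm (fun _ ⟨_, hx, hw⟩ => hx _ hw) fun _ => exists_mem_shiftOf_occursZ hL hext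

/-! ### Left-infinite words -/

/-- The last `n` letters of the left-infinite word `⋯ x₂ x₁ x₀`, which is encoded by the function
`x : ℕ → S`, so that position `0` holds the last letter. -/
def suffix (x : ℕ → S) : ℕ → List S
  | 0 => []
  | n + 1 => x n :: suffix x n

/-- The left-infinite word `x` followed by the finite word `w`. -/
def appendWord (x : ℕ → S) (w : List S) : ℕ → S :=
  fun i => w.reverse.getD i (x (i - w.length))

@[simp]
lemma length_suffix (x : ℕ → S) (n : ℕ) : (suffix x n).length = n := by
  induction n with
  | zero => rfl
  | succ n ih => exact congrArg (· + 1) ih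

lemma suffix_add (x : ℕ → S) (m n : ℕ) :
    suffix x (m + n) = suffix (fun i => x (i + n)) m ++ suffix x n := by
  induction m with
  | zero => rw [zero_add]; rfl
  | succ m ih => rw [Nat.add_right_comm, suffix, ih, suffix, List.cons_append]

lemma suffix_eq_suffix_iff {x y : ℕ → S} {n : ℕ} :
    suffix x n = suffix y n ↔ ∀ i < n, x i = y i := by
  induction n with
  | zero => simp [suffix]
  | succ n ih => simp only [suffix, List.cons.injEq, ih, Nat.forall_lt_succ_right, and_comm]

lemma suffix_infix (x : ℕ → S) {m n : ℕ} (h : m ≤ n) : suffix x m <:+: suffix x n := by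
  rw [← Nat.sub_add_cancel h, suffix_add]
  exact (List.suffix_append _ _).isInfix

lemma suffix_length_eq {x : ℕ → S} {w : List S} (h : ∀ i < w.length, w.reverse[i]? = some (x i)) :
    suffix x w.length = w := by
  induction w with
  | nil => rfl
  | cons c w ih =>
    have hhead := h w.length (Nat.lt_succ_self _)
    have htail : ∀ i < w.length, w.reverse[i]? = some (x i) := fun i hi => by
      rw [← h i (hi.trans (Nat.lt_succ_self _)), List.reverse_cons,
        List.getElem?_append_left (by rwa [List.length_reverse])]
    rw [List.length_cons, suffix, ih htail]
    simpa using hhead.symm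

lemma suffix_eq_factorZ (x : ℤ → S) (n : ℕ) :
    suffix (fun i => x (-1 - i)) n = factorZ x (-n) n := by
  induction n with
  | zero => rfl
  | succ n ih =>
    rw [suffix, ih, add_comm n 1, factorZ_add, factorZ_one, List.singleton_append]
    congr 2 <;> push_cast <;> ring

lemma appendWord_add_length (x : ℕ → S) (w : List S) (i : ℕ) :
    appendWord x w (i + w.length) = x i := by
  simp [appendWord]

lemma suffix_appendWord_length (x : ℕ → S) (w : List S) : suffix (appendWord x w) w.length = w := by
  refine suffix_length_eq fun i hi => ?_
  rw [appendWord, List.getD_eq_getElem _ _ (by rwa [List.length_reverse]), List.getElem?_eq_getElem]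

lemma suffix_appendWord (x : ℕ → S) (w : List S) (n : ℕ) :
    suffix (appendWord x w) (n + w.length) = suffix x n ++ w := by
  simp only [suffix_add, appendWord_add_length, suffix_appendWord_length]

lemma appendWord_append (x : ℕ → S) (v w : List S) :
    appendWord (appendWord x v) w = appendWord x (v ++ w) := by
  funext i
  unfold appendWord
  rw [List.reverse_append]
  obtain hi | hi := lt_or_ge i w.reverse.length
  · rw [List.getD_append _ _ _ _ hi, List.getD_eq_getElem _ _ hi, List.getD_eq_getElem _ _ hi]
  · rw [List.getD_append_right _ _ _ _ hi, List.getD_eq_default _ _ hi, List.length_reverse,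
      List.length_append, Nat.add_comm, Nat.sub_add_eq]

lemma appendWord_cons_length (x : ℕ → S) (b : S) (u : List S) :
    appendWord x (b :: u) u.length = b := by
  simp [appendWord]

/-- The left-infinite words with every finite suffix in `L`. -/
def leftShift (L : Set (List S)) : Set (ℕ → S) := {x | ∀ n, suffix x n ∈ L}

/-- The left-infinite words that stay in `leftShift L` when prolonged by either of two distinct
letters. -/
def rightSpecial (L : Set (List S)) : Set (ℕ → S) :=
  {x | ∃ c d, c ≠ d ∧ appendWord x [c] ∈ leftShift L ∧ appendWord x [d] ∈ leftShift L}

lemma neg_one_sub_mem_leftShift {L : Set (List S)} {x : ℤ → S} (hx : x ∈ shiftOf L) :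
    (fun i : ℕ => x (-1 - i)) ∈ leftShift L := fun n => by
  rw [suffix_eq_factorZ]
  exact mem_shiftOf.1 hx _ _

lemma exists_forall_suffix_mem [Finite S] {K : Set (List S)}
    (hK : ∀ ⦃v w : List S⦄, w ∈ K → v <:+ w → v ∈ K) (hlen : ∀ n, ∃ v ∈ K, v.length = n) :
    ∃ x, ∀ n, suffix x n ∈ K := by
  obtain ⟨v, hmem, hlength, hcoh⟩ : ∃ v : ℕ → List S, (∀ n, v n ∈ K) ∧ (∀ n, (v n).length = n) ∧
      ∀ n, (v (n + 1)).tail = v n := by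
    have hfin : ∀ n, Finite {v // v ∈ K ∧ v.length = n} := fun n =>
      ((List.finite_length_eq S n).subset fun _ hv => hv.2).to_subtype
    have hne : ∀ n, Nonempty {v // v ∈ K ∧ v.length = n} := fun n => nonempty_subtype.2 (hlen n)
    obtain ⟨v, hv⟩ := exists_seq_forall_proj_of_forall_finite
      (fun {i j} hij (w : {v // v ∈ K ∧ v.length = j}) => (⟨w.1.drop (j - i),
        hK w.2.1 (List.drop_suffix _ _), by rw [List.length_drop, w.2.2, Nat.sub_sub_self hij]⟩ :
          {v // v ∈ K ∧ v.length = i}))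
      (fun i w => Subtype.ext (by simp only [Nat.sub_self, List.drop_zero]))
      (fun i j k hij hjk w => Subtype.ext (by
        simp only [List.drop_drop, Nat.sub_add_sub_cancel hjk hij]))
      (fun i w => toFinite _)
    refine ⟨fun n => (v n).1, fun n => (v n).2.1, fun n => (v n).2.2, fun n => ?_⟩
    have hn := congrArg Subtype.val (hv n.le_succ)
    simpa only [Nat.succ_eq_add_one, Nat.add_sub_cancel_left, List.drop_one] using hn
  refine ⟨fun n => (v (n + 1)).head (by simp [← List.length_pos_iff, hlength]), fun n => ?_⟩
  suffices h : suffix _ n = v n from h ▸ hmem n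
  induction n with
  | zero => exact (List.length_eq_zero_iff.1 (hlength 0)).symm
  | succ n ih => rw [suffix, ih, ← hcoh n, List.cons_head_tail]

section Factorial

variable {L : Set (List S)} (hL : IsFactorial L)

include hL

lemma mem_leftShift_iff_mul_add {x : ℕ → S} {k : ℕ} (hk : 0 < k) (r : ℕ) :
    x ∈ leftShift L ↔ ∀ n, suffix x (k * n + r) ∈ L :=
  ⟨fun hx _ => hx _, fun hx n =>
    hL (hx n) (suffix_infix x (Nat.le_add_right_of_le (Nat.le_mul_of_pos_left n hk)))⟩

lemma appendWord_mem_leftShift {x : ℕ → S} {w : List S} :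
    appendWord x w ∈ leftShift L ↔ ∀ n, suffix x n ++ w ∈ L := by
  simp only [mem_leftShift_iff_mul_add hL one_pos w.length, one_mul, suffix_appendWord]

lemma mem_leftShift_of_append_mem {x : ℕ → S} {w : List S} (h : appendWord x w ∈ leftShift L) :
    x ∈ leftShift L := fun n =>
  hL ((appendWord_mem_leftShift hL).1 h n) (List.prefix_append _ _).isInfix

lemma exists_periodic_mem_shiftOf {x : ℕ → S} (hx : x ∈ leftShift L) {d : ℕ} (hd : 0 < d)
    (hper : Periodic x d) : ∃ y ∈ shiftOf L, Periodic y (d : ℤ) := by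
  let y : ℤ → S := fun t => x ((-1 - t) % d).toNat
  have hy : Periodic y (d : ℤ) := fun t => by
    simp only [y, ← sub_sub, Int.sub_emod_right]
  have hyx : (fun i : ℕ => y (-1 - i)) = x := by
    funext i
    rw [← hper.map_mod_nat i]
    simp only [y, sub_sub_cancel, ← Int.natCast_mod, Int.toNat_natCast]
  refine ⟨y, mem_shiftOf.2 fun i n => ?_, hy⟩
  have hleft : i + n ≤ (i.natAbs + n : ℕ) * d :=
    calc i + n ≤ (i.natAbs + n : ℕ) := by omega
      _ ≤ (i.natAbs + n : ℕ) * d := le_mul_of_one_le_right (by omega) (by omega)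
  rw [← factorZ_add_mul_period hy i (-(i.natAbs + n : ℕ)) n]
  obtain ⟨M, hM⟩ : ∃ M : ℕ, -(M : ℤ) ≤ i + -(i.natAbs + n : ℕ) * d :=
    ⟨(i + -(i.natAbs + n : ℕ) * d).natAbs, by omega⟩
  refine hL (hx M) ?_
  rw [← hyx, suffix_eq_factorZ]
  exact factorZ_infix y hM (by linarith)

lemma IsAperiodic.not_periodic_of_mem_leftShift (haper : IsAperiodic (shiftOf L)) {x : ℕ → S}
    (hx : x ∈ leftShift L) {d : ℕ} (hd : 0 < d) : ¬ Periodic x d := fun hper => by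
  obtain ⟨y, hy, hyper⟩ := exists_periodic_mem_shiftOf hL hx hd hper
  exact haper y hy d hd hyper

end Factorial

/-! ### Finite dynamics -/

lemma exists_iterate_eqOn_id {α : Type*} {f : α → α} {s : Set α} (hs : s.Finite)
    (hmaps : MapsTo f s s) (hinj : InjOn f s) : ∃ N, 0 < N ∧ EqOn f^[N] id s := by
  have := hs.fintype
  refine ⟨(Fintype.card s).factorial, Nat.factorial_pos _, fun x hx => ?_⟩
  have hfix := isPeriodicPt_factorial_card_of_mem_periodicPts
    ((hmaps.restrict_inj.2 hinj).mem_periodicPts ⟨x, hx⟩)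
  have := congrArg Subtype.val hfix
  rwa [hmaps.iterate_restrict] at this

lemma exists_periodic_of_deterministic {α : Type*} {u : ℤ → α} (hfin : (range u).Finite)
    (hdet : ∀ i j, u i = u j → u (i + 1) = u (j + 1)) : ∃ N : ℕ, 0 < N ∧ Periodic u (N : ℤ) := by
  let f : α → α := extend u (fun i => u (i + 1)) id
  have hf : ∀ i, f (u i) = u (i + 1) := FactorsThrough.extend_apply hdet id
  have hmaps : MapsTo f (range u) (range u) := by
    rintro _ ⟨i, rfl⟩
    exact ⟨i + 1, (hf i).symm⟩
  have hsurj : SurjOn f (range u) (range u) := by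
    rintro _ ⟨i, rfl⟩
    exact ⟨u (i - 1), mem_range_self _, by rw [hf, sub_add_cancel]⟩
  obtain ⟨N, hN, hid⟩ := exists_iterate_eqOn_id hfin hmaps
    ((hfin.surjOn_iff_bijOn_of_mapsTo hmaps).1 hsurj).injOn
  have hiter : ∀ (n : ℕ) i, f^[n] (u i) = u (i + n) := by
    intro n i
    induction n with
    | zero => simp
    | succ n ih => rw [iterate_succ_apply', ih, hf, Nat.cast_succ, add_assoc]
  exact ⟨N, hN, fun i => (hiter N i).symm.trans (hid (mem_range_self i))⟩

/-- The Morse–Hedlund argument: if no word of length `k` had two continuations, the windows of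
length `k` along a point of the subshift would determine their successors. -/
lemma IsAperiodic.exists_right_special [Finite S] {L : Set (List S)}
    (haper : IsAperiodic (shiftOf L)) (hne : (shiftOf L).Nonempty) (k : ℕ) :
    ∃ w : List S, w.length = k ∧ ∃ c d, c ≠ d ∧ w ++ [c] ∈ L ∧ w ++ [d] ∈ L := by
  by_contra! hdet
  obtain ⟨x, hx⟩ := hne
  have hmem : ∀ i, factorZ x i k ++ [x (i + k)] ∈ L := fun i => by
    rw [← factorZ_one, ← factorZ_add]
    exact mem_shiftOf.1 hx _ _
  have hnext : ∀ i j, factorZ x i k = factorZ x j k → x (i + k) = x (j + k) := fun i j h => by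
    by_contra hij
    exact hdet _ (length_factorZ x i k) _ _ hij (hmem i) (h ▸ hmem j)
  have hshift : ∀ i j, factorZ x i k = factorZ x j k →
      factorZ x (i + 1) k = factorZ x (j + 1) k := fun i j h => by
    have happ : factorZ x i (1 + k) = factorZ x j (1 + k) := by
      rw [add_comm, factorZ_add, factorZ_add, factorZ_one, factorZ_one, h, hnext i j h]
    simp only [factorZ_add] at happ
    exact (List.append_inj happ (by simp only [length_factorZ])).2
  have hfin : (range fun i => factorZ x i k).Finite :=
    (List.finite_length_eq S k).subset (range_subset_iff.2 fun i => length_factorZ x i k)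
  obtain ⟨N, hN, hper⟩ := exists_periodic_of_deterministic hfin hshift
  refine haper x hx N hN fun i => ?_
  have := hnext _ _ (hper (i - k))
  convert this using 2 <;> ring

/-! ### Languages of substitutions -/

/-- A substitution is primitive if all letters occur in each image of some iterate. -/
def IsPrimitive (τ : S → List S) : Prop := ∃ n, ∀ c d, d ∈ substIter τ n c

section Substitution

variable {τ : S → List S}

lemma substIter_add (τ : S → List S) (m n : ℕ) (c : S) :
    substIter τ (m + n) c = (substIter τ m c).flatMap (substIter τ n) := by
  induction n with
  | zero => exact (List.flatMap_singleton' _).symm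
  | succ n ih => rw [← add_assoc, substIter, ih, substWord, List.flatMap_assoc]; rfl

lemma isFactorial_substLang (τ : S → List S) : IsFactorial (substLang τ) :=
  fun _ _ ⟨n, c, hw⟩ hv => ⟨n, c, hv.trans hw⟩

lemma shiftOf_substLang_nonempty [Nonempty S] (hext : IsExtendable (substLang τ)) :
    (shiftOf (substLang τ)).Nonempty :=
  (exists_mem_shiftOf_occursZ (isFactorial_substLang τ) hext
    ⟨0, Classical.arbitrary S, List.infix_refl _⟩).imp fun _ hx => hx.1

lemma flatMap_mem_substLang {w : List S} (hw : w ∈ substLang τ) : w.flatMap τ ∈ substLang τ := by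
  obtain ⟨n, c, u, v, huv⟩ := hw
  refine ⟨n + 1, c, u.flatMap τ, v.flatMap τ, ?_⟩
  rw [substIter, substWord, ← huv, List.flatMap_append, List.flatMap_append]

namespace IsPrimitive

lemma substIter_ne_nil [Nontrivial S] (hτ : IsPrimitive τ) (n : ℕ) (c : S) :
    substIter τ n c ≠ [] := by
  obtain ⟨M, hM⟩ := hτ
  have hletter : ∀ d, τ d ≠ [] := fun d hd => by
    obtain ⟨e, he⟩ := exists_ne d
    cases M with
    | zero => exact he (List.mem_singleton.1 (hM d e))
    | succ M =>
      have hnil : substIter τ (M + 1) d = [] := by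
        rw [add_comm, substIter_add, substIter, substIter, substWord, List.flatMap_singleton, hd]
        rfl
      exact List.not_mem_nil (hnil ▸ hM d e)
  induction n with
  | zero => exact List.cons_ne_nil _ _
  | succ n ih =>
    obtain ⟨d, w, hdw⟩ := List.exists_cons_of_ne_nil ih
    rw [substIter, hdw, substWord, List.flatMap_cons]
    exact List.append_ne_nil_of_left_ne_nil (hletter d) _

lemma exists_eq_cons_cons [Nontrivial S] (hτ : IsPrimitive τ) :
    ∃ n, (∀ c d, d ∈ substIter τ n c) ∧ ∀ c, ∃ a b w, substIter τ n c = a :: b :: w := by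
  obtain ⟨n, hn⟩ := hτ
  refine ⟨n, hn, fun c => ?_⟩
  obtain ⟨d, e, hde⟩ := exists_pair_ne S
  match substIter τ n c, hn c d, hn c e with
  | [a], hd, he => exact absurd ((List.mem_singleton.1 hd).trans (List.mem_singleton.1 he).symm) hde
  | a :: b :: w, _, _ => exact ⟨a, b, w, rfl⟩

lemma exists_substIter_eq_append_cons [Nontrivial S] (hτ : IsPrimitive τ) (s : S) :
    ∃ n c u v, u ≠ [] ∧ v ≠ [] ∧ substIter τ n c = u ++ s :: v := by
  have hne := hτ.substIter_ne_nil
  obtain ⟨n, hn, hcons⟩ := hτ.exists_eq_cons_cons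
  obtain ⟨a, b, w, hs⟩ := hcons s
  obtain ⟨a₁, a₂, wa, ha⟩ := hcons a
  obtain ⟨b₁, b₂, wb, hb⟩ := hcons b
  obtain ⟨u, v, huv⟩ := List.append_of_mem (hn a₂ s)
  refine ⟨n + n + n, s, substIter τ n a₁ ++ u, v ++ (wa ++ (b₁ :: b₂ :: wb) ++
    w.flatMap (substIter τ n)).flatMap (substIter τ n), ?_, ?_, ?_⟩
  · exact List.append_ne_nil_of_left_ne_nil (hne _ _) _
  · simp [hne]
  · rw [substIter_add, substIter_add, hs]
    simp [ha, hb, huv]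

lemma isExtendable_substLang [Nontrivial S] (hτ : IsPrimitive τ) : IsExtendable (substLang τ) := by
  rintro w ⟨n, s, a, b, hab⟩
  have hne := hτ.substIter_ne_nil
  obtain ⟨m, c, u, v, hu, hv, huv⟩ := hτ.exists_substIter_eq_append_cons s
  have hnonempty : ∀ {v : List S}, v ≠ [] → v.flatMap (substIter τ n) ≠ [] := fun hv h =>
    hv (List.eq_nil_iff_forall_not_mem.2 fun d hd => hne n d (List.flatMap_eq_nil_iff.1 h d hd))
  obtain ⟨u', d, hleft⟩ : ∃ u' d, u.flatMap (substIter τ n) ++ a = u' ++ [d] :=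
    ⟨_, _, (List.dropLast_append_getLast
      (List.append_ne_nil_of_left_ne_nil (hnonempty hu) a)).symm⟩
  obtain ⟨e, v', hright⟩ : ∃ e v', b ++ v.flatMap (substIter τ n) = e :: v' :=
    List.exists_cons_of_ne_nil (List.append_ne_nil_of_right_ne_nil b (hnonempty hv))
  refine ⟨d, e, m + n, c, u', v', ?_⟩
  calc u' ++ (d :: w ++ [e]) ++ v' = (u' ++ [d]) ++ w ++ (e :: v') := by simp
    _ = u.flatMap (substIter τ n) ++ (a ++ w ++ b) ++ v.flatMap (substIter τ n) := by
      rw [← hleft, ← hright]; simp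
    _ = substIter τ (m + n) c := by
      rw [substIter_add, huv, List.flatMap_append, List.flatMap_cons, hab, List.append_assoc]

end IsPrimitive

lemma length_flatMap_of_uniform {σ : S → List S} {ℓ : ℕ} (hσ : ∀ c, (σ c).length = ℓ)
    (w : List S) : (w.flatMap σ).length = ℓ * w.length := by
  simp [List.length_flatMap, hσ, mul_comm]

lemma length_substIter {ℓ : ℕ} (hℓ : ∀ c, (τ c).length = ℓ) (n : ℕ) (c : S) :
    (substIter τ n c).length = ℓ ^ n := by
  induction n with
  | zero => rfl
  | succ n ih => rw [substIter, substWord, length_flatMap_of_uniform hℓ, ih, pow_succ']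

lemma IsPrimitive.two_le_length [Nontrivial S] (hτ : IsPrimitive τ) {ℓ : ℕ}
    (hℓ : ∀ c, (τ c).length = ℓ) : 2 ≤ ℓ := by
  obtain ⟨n, -, hcons⟩ := hτ.exists_eq_cons_cons
  obtain ⟨a, b, w, h⟩ := hcons (Classical.arbitrary S)
  have hlen : 1 < ℓ ^ n := by
    rw [← length_substIter hℓ n, h]
    exact Nat.succ_lt_succ (Nat.succ_pos _)
  by_contra! hlt
  exact hlen.not_ge (pow_le_one₀ ℓ.zero_le (Nat.lt_succ_iff.1 hlt))

end Substitution

/-! ### Factor complexity -/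

/-- The words of length `n` in the language `L`. -/
def wordsOfLength (L : Set (List S)) (n : ℕ) : Set (List S) := {w ∈ L | w.length = n}

/-- The factor complexity of a language: the number of its words of length `n`. -/
noncomputable def complexity (L : Set (List S)) (n : ℕ) : ℕ := (wordsOfLength L n).ncard

lemma wordsOfLength_finite [Finite S] (L : Set (List S)) (n : ℕ) : (wordsOfLength L n).Finite :=
  (List.finite_length_eq S n).subset fun _ hw => hw.2

lemma exists_infix_append_of_infix_flatMap {σ : S → List S} {M : ℕ} (hσ : ∀ c, (σ c).length = M)
    {v w : List S} (hw : w.length = M) (hM : 0 < M) (h : w <:+: v.flatMap σ) :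
    ∃ a b, w <:+: σ a ++ σ b := by
  induction v with
  | nil =>
    rw [List.flatMap_nil, List.infix_nil] at h
    rw [h] at hw
    exact absurd hw hM.ne
  | cons c v ih =>
    rw [List.flatMap_cons, List.infix_append_iff] at h
    obtain h | h | ⟨s, t, rfl, hs, ht⟩ := h
    · exact ⟨c, c, h.trans (List.prefix_append _ _).isInfix⟩
    · exact ih h
    · cases v with
      | nil =>
        rw [List.flatMap_nil, List.prefix_nil] at ht
        subst ht
        exact ⟨c, c, by simpa using hs.isInfix.trans (List.prefix_append _ _).isInfix⟩
      | cons b v =>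
        have htb : t <+: σ b := List.prefix_of_prefix_length_le ht (List.prefix_append _ _) (by
          rw [hσ, ← hw, List.length_append]; omega)
        obtain ⟨s', hs'⟩ := hs
        obtain ⟨t', ht'⟩ := htb
        exact ⟨c, b, s', t', by simp [← hs', ← ht']⟩

lemma complexity_substLang_pow_le [Fintype S] {τ : S → List S} {ℓ : ℕ}
    (hℓ : ∀ c, (τ c).length = ℓ) (h2 : 2 ≤ ℓ) (k : ℕ) :
    complexity (substLang τ) (ℓ ^ k) ≤ 3 * Fintype.card S ^ 2 * ℓ ^ k := by
  have hpos : 0 < ℓ ^ k := Nat.pow_pos (by omega)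
  let G : S × S × Fin (2 * ℓ ^ k + 1) → List S := fun t =>
    ((substIter τ k t.1 ++ substIter τ k t.2.1).drop t.2.2).take (ℓ ^ k)
  have hG : wordsOfLength (substLang τ) (ℓ ^ k) ⊆ range G := by
    rintro w ⟨⟨n, s, hinf⟩, hw⟩
    have hkn : k ≤ n := by
      rw [← Nat.pow_le_pow_iff_right (a := ℓ) (by omega), ← hw, ← length_substIter hℓ n s]
      exact hinf.length_le
    obtain ⟨m, rfl⟩ := Nat.exists_eq_add_of_le' hkn
    rw [substIter_add] at hinf
    obtain ⟨a, b, u, v, huv⟩ :=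
      exists_infix_append_of_infix_flatMap (length_substIter hℓ k) hw hpos hinf
    have hlen := congrArg List.length huv
    simp only [List.length_append, length_substIter hℓ] at hlen
    refine ⟨(a, b, ⟨u.length, by omega⟩), ?_⟩
    simp only [G, ← huv, List.append_assoc, List.drop_left, ← hw, List.take_left]
  calc complexity (substLang τ) (ℓ ^ k) ≤ (range G).ncard := ncard_le_ncard hG (toFinite _)
    _ ≤ Nat.card (S × S × Fin (2 * ℓ ^ k + 1)) := by
      rw [← image_univ, ← ncard_univ]
      exact ncard_image_le
    _ = Fintype.card S ^ 2 * (2 * ℓ ^ k + 1) := by simp; ring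
    _ ≤ Fintype.card S ^ 2 * (3 * ℓ ^ k) := Nat.mul_le_mul_left _ (by omega)
    _ = 3 * Fintype.card S ^ 2 * ℓ ^ k := by ring

lemma eventually_injOn_suffix {A : Set (ℕ → S)} (hA : A.Finite) :
    ∀ᶠ n in Filter.atTop, InjOn (fun x => suffix x n) A := by
  simp only [InjOn, Filter.eventually_all_finite hA]
  intro x _ y _
  by_cases hxy : x = y
  · exact Filter.Eventually.of_forall fun _ _ => hxy
  · obtain ⟨i, hi⟩ := ne_iff.1 hxy
    filter_upwards [Filter.eventually_gt_atTop i] with n hn h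
    exact absurd (suffix_eq_suffix_iff.1 h i hn) hi

lemma exists_mem_wordsOfLength_succ {L : Set (List S)} (hL : IsFactorial L)
    (hext : IsExtendable L) {n : ℕ} {w : List S} (hw : w ∈ wordsOfLength L n) :
    ∃ w' ∈ wordsOfLength L (n + 1), w'.dropLast = w := by
  obtain ⟨v, hv, hwv⟩ := hext.exists_append_mem hL hw.1 1
  obtain ⟨c, rfl⟩ := List.length_eq_one_iff.1 hv
  exact ⟨_, ⟨hwv, by simp [hw.2]⟩, List.dropLast_concat⟩

lemma exists_mem_wordsOfLength_succ_ne {L : Set (List S)} (hL : IsFactorial L) {x : ℕ → S}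
    (hx : x ∈ rightSpecial L) {n : ℕ} (w : List S) :
    ∃ w' ∈ wordsOfLength L (n + 1), w'.dropLast = suffix x n ∧ w' ≠ w := by
  obtain ⟨c, d, hcd, hc, hd⟩ := hx
  rw [appendWord_mem_leftShift hL] at hc hd
  by_cases h : suffix x n ++ [c] = w
  · refine ⟨_, ⟨hd n, by simp⟩, List.dropLast_concat, fun h' => hcd ?_⟩
    simpa using h.trans h'.symm
  · exact ⟨_, ⟨hc n, by simp⟩, List.dropLast_concat, h⟩

/-- Each word of length `n` has one continuation `e w`, and the suffixes of length `n` of right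
special words have a second one. -/
lemma complexity_add_ncard_le [Finite S] {L : Set (List S)} (hL : IsFactorial L)
    (hext : IsExtendable L) {A : Set (ℕ → S)} (hA : A.Finite) (hAL : A ⊆ rightSpecial L) {n : ℕ}
    (hinj : InjOn (fun x => suffix x n) A) :
    complexity L n + A.ncard ≤ complexity L (n + 1) := by
  choose! e he heinv using fun w (hw : w ∈ wordsOfLength L n) =>
    exists_mem_wordsOfLength_succ hL hext hw
  choose! g hg hginv hge using fun x (hx : x ∈ A) =>
    exists_mem_wordsOfLength_succ_ne hL (hAL hx) (n := n) (e (suffix x n))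
  have heinj : InjOn e (wordsOfLength L n) := LeftInvOn.injOn heinv
  have hginj : InjOn g A := fun x hx y hy h => hinj hx hy <| by
    simp only [← hginv x hx, ← hginv y hy, h]
  have hdisj : Disjoint (e '' wordsOfLength L n) (g '' A) := by
    rw [disjoint_left]
    rintro _ ⟨w, hw, rfl⟩ ⟨x, hx, h⟩
    refine hge x hx ?_
    rw [← hginv x hx, h, heinv w hw]
  rw [complexity, ← heinj.ncard_image, ← hginj.ncard_image,
    ← ncard_union_eq hdisj ((wordsOfLength_finite L n).image e) (hA.image g)]
  exact ncard_le_ncard (union_subset (image_subset_iff.2 he) (image_subset_iff.2 hg))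
    (wordsOfLength_finite L (n + 1))

lemma rightSpecial_finite [Finite S] {L : Set (List S)} (hL : IsFactorial L)
    (hext : IsExtendable L) {C : ℕ} (hC : ∃ᶠ n in Filter.atTop, complexity L n ≤ C * n) :
    (rightSpecial L).Finite := by
  by_contra hinf
  obtain ⟨A, hAL, hA, hcard⟩ := (not_finite.1 hinf : Set.Infinite _).exists_subset_ncard_eq (C + 1)
  obtain ⟨n₀, hn₀⟩ := Filter.eventually_atTop.1 (eventually_injOn_suffix hA)
  have hlower : ∀ m, (C + 1) * m ≤ complexity L (n₀ + m) := by
    intro m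
    induction m with
    | zero => exact Nat.zero_le _
    | succ m ih =>
      have := complexity_add_ncard_le hL hext hA hAL (hn₀ (n₀ + m) (Nat.le_add_right _ _))
      rw [hcard] at this
      rw [← add_assoc, mul_add_one]
      omega
  obtain ⟨n, hn, hupper⟩ := (Filter.frequently_atTop.1 hC) ((C + 1) * n₀ + n₀ + 1)
  obtain ⟨m, rfl⟩ := Nat.exists_eq_add_of_le (show n₀ ≤ n by omega)
  have := (hlower m).trans hupper
  rw [add_one_mul] at this hn
  rw [mul_add] at this
  omega

lemma frequently_complexity_substLang_le [Fintype S] {τ : S → List S} {ℓ : ℕ}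
    (hℓ : ∀ c, (τ c).length = ℓ) (h2 : 2 ≤ ℓ) :
    ∃ᶠ n in Filter.atTop, complexity (substLang τ) n ≤ 3 * Fintype.card S ^ 2 * n :=
  Filter.frequently_atTop.2 fun k =>
    ⟨ℓ ^ k, (Nat.lt_pow_self h2).le, complexity_substLang_pow_le hℓ h2 k⟩

/-! ### Substitutions on left-infinite words -/

section LeftSubst

variable {τ : S → List S} {ℓ : ℕ}

/-- The image of the left-infinite word `x` under a substitution `τ` of constant length `ℓ`. The
default value `x 0` is never used. -/
def leftSubst (τ : S → List S) (ℓ : ℕ) (x : ℕ → S) : ℕ → S :=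
  fun i => (τ (x (i / ℓ))).reverse.getD (i % ℓ) (x 0)

lemma suffix_leftSubst (hℓ : ∀ c, (τ c).length = ℓ) (x : ℕ → S) (n : ℕ) :
    suffix (leftSubst τ ℓ x) (ℓ * n) = (suffix x n).flatMap τ := by
  induction n with
  | zero => rfl
  | succ n ih =>
    rw [mul_add_one, add_comm, suffix_add, ih, suffix, List.flatMap_cons]
    congr 1
    rw [← hℓ (x n)]
    refine suffix_length_eq fun i hi => ?_
    rw [hℓ] at hi ⊢
    have hdiv : (i + ℓ * n) / ℓ = n := by
      rw [Nat.add_mul_div_left _ _ (by omega), Nat.div_eq_of_lt hi, zero_add]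
    rw [leftSubst, hdiv, Nat.add_mul_mod_self_left, Nat.mod_eq_of_lt hi,
      List.getD_eq_getElem _ _ (by rwa [List.length_reverse, hℓ]), List.getElem?_eq_getElem]

lemma leftSubst_mem_leftShift (hℓ : ∀ c, (τ c).length = ℓ) (hpos : 0 < ℓ) {x : ℕ → S}
    (hx : x ∈ leftShift (substLang τ)) : leftSubst τ ℓ x ∈ leftShift (substLang τ) := by
  refine (mem_leftShift_iff_mul_add (isFactorial_substLang τ) hpos 0).2 fun n => ?_
  rw [add_zero, suffix_leftSubst hℓ]
  exact flatMap_mem_substLang (hx n)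

lemma leftSubst_injective (hℓ : ∀ c, (τ c).length = ℓ) (hτ : Injective τ) :
    Injective (leftSubst τ ℓ) := fun x y hxy => by
  funext n
  have hsuffix : (suffix x (n + 1)).flatMap τ = (suffix y (n + 1)).flatMap τ := by
    rw [← suffix_leftSubst hℓ, hxy, suffix_leftSubst hℓ]
  exact hτ (List.append_inj hsuffix (by rw [hℓ, hℓ])).1

lemma appendWord_left_injective (w : List S) : Injective fun x : ℕ → S => appendWord x w :=
  fun x y hxy => funext fun i => by
    rw [← appendWord_add_length x w, ← appendWord_add_length y w]
    exact congrFun hxy _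

/-- If the images of distinct letters under `τ` first differ after the common prefix `p`, then this
map sends right special words to right special words. -/
def specialLift (τ : S → List S) (ℓ : ℕ) (p : List S) (x : ℕ → S) : ℕ → S :=
  appendWord (leftSubst τ ℓ x) p

lemma suffix_specialLift (hℓ : ∀ c, (τ c).length = ℓ) (p : List S) (x : ℕ → S) (n : ℕ) :
    suffix (specialLift τ ℓ p x) (ℓ * n + p.length) = (suffix x n).flatMap τ ++ p := by
  rw [specialLift, suffix_appendWord, suffix_leftSubst hℓ]

lemma appendWord_specialLift_mem_leftShift (hℓ : ∀ c, (τ c).length = ℓ) (hpos : 0 < ℓ)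
    {p s : List S} {c d : S} (hc : τ c = p ++ d :: s) {x : ℕ → S}
    (hx : appendWord x [c] ∈ leftShift (substLang τ)) :
    appendWord (specialLift τ ℓ p x) [d] ∈ leftShift (substLang τ) := by
  have hL := isFactorial_substLang τ
  refine (mem_leftShift_iff_mul_add hL hpos (p.length + [d].length)).2 fun n => ?_
  rw [← add_assoc, suffix_appendWord, suffix_specialLift hℓ]
  refine hL (flatMap_mem_substLang ((appendWord_mem_leftShift hL).1 hx n)) ?_
  exact ⟨[], s, by simp [hc]⟩

variable {p : List S} {f : S → S} {s : S → List S}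

lemma mapsTo_specialLift_rightSpecial (hℓ : ∀ c, (τ c).length = ℓ) (hpos : 0 < ℓ)
    (hτ : ∀ c, τ c = p ++ f c :: s c) (hf : Injective f) :
    MapsTo (specialLift τ ℓ p) (rightSpecial (substLang τ)) (rightSpecial (substLang τ)) :=
  fun _ ⟨c, d, hcd, hc, hd⟩ => ⟨f c, f d, hf.ne hcd,
    appendWord_specialLift_mem_leftShift hℓ hpos (hτ c) hc,
    appendWord_specialLift_mem_leftShift hℓ hpos (hτ d) hd⟩

lemma specialLift_injective (hℓ : ∀ c, (τ c).length = ℓ) (hτ : Injective τ) (p : List S) :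
    Injective (specialLift τ ℓ p) :=
  (appendWord_left_injective p).comp (leftSubst_injective hℓ hτ)

lemma suffix_iterate_specialLift_eq (hℓ : ∀ c, (τ c).length = ℓ) (h2 : 2 ≤ ℓ) (p : List S)
    {x y : ℕ → S} (hxy : x 0 = y 0) (k : ℕ) :
    suffix ((specialLift τ ℓ p)^[k] x) (k + 1) = suffix ((specialLift τ ℓ p)^[k] y) (k + 1) := by
  induction k with
  | zero => exact congrArg (· :: []) hxy
  | succ k ih =>
    rw [iterate_succ_apply', iterate_succ_apply']
    have hlong : suffix (specialLift τ ℓ p ((specialLift τ ℓ p)^[k] x)) (ℓ * (k + 1) + p.length) =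
        suffix (specialLift τ ℓ p ((specialLift τ ℓ p)^[k] y)) (ℓ * (k + 1) + p.length) := by
      rw [suffix_specialLift hℓ, suffix_specialLift hℓ, ih]
    have hlen : k + 2 ≤ ℓ * (k + 1) + p.length := by nlinarith
    exact suffix_eq_suffix_iff.2 fun i hi => suffix_eq_suffix_iff.1 hlong i (hi.trans_le hlen)

lemma injOn_zero_rightSpecial (hℓ : ∀ c, (τ c).length = ℓ) (h2 : 2 ≤ ℓ)
    (hτ : ∀ c, τ c = p ++ f c :: s c) (hf : Injective f)
    (hfin : (rightSpecial (substLang τ)).Finite) :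
    InjOn (fun x => x 0) (rightSpecial (substLang τ)) := by
  have hinj : Injective τ := fun c d hcd => by
    rw [hτ, hτ, List.append_cancel_left_eq] at hcd
    exact hf (List.cons.inj hcd).1
  obtain ⟨N, hN, hid⟩ := exists_iterate_eqOn_id hfin
    (mapsTo_specialLift_rightSpecial hℓ (by omega) hτ hf) (specialLift_injective hℓ hinj p).injOn
  have hfix : ∀ x ∈ rightSpecial (substLang τ), ∀ n, (specialLift τ ℓ p)^[N * n] x = x :=
    fun x hx n => by
      rw [iterate_mul]
      exact iterate_fixed (hid hx) n
  intro x hx y hy hxy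
  funext n
  have hsuffix := suffix_iterate_specialLift_eq hℓ h2 p hxy (N * n)
  rw [hfix x hx, hfix y hy] at hsuffix
  exact suffix_eq_suffix_iff.1 hsuffix n (Nat.lt_succ_of_le (Nat.le_mul_of_pos_left n hN))

lemma IsAperiodic.not_forall_eq_of_uniform (haper : IsAperiodic (shiftOf (substLang τ)))
    (hne : (shiftOf (substLang τ)).Nonempty) (hℓ : ∀ c, (τ c).length = ℓ) (hpos : 0 < ℓ) :
    ¬ ∀ c d, τ c = τ d := by
  intro hconst
  obtain ⟨x, hx⟩ : (leftShift (substLang τ)).Nonempty :=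
    hne.elim fun _ hy => ⟨_, neg_one_sub_mem_leftShift hy⟩
  refine haper.not_periodic_of_mem_leftShift (isFactorial_substLang τ)
    (leftSubst_mem_leftShift hℓ hpos hx) hpos fun i => ?_
  rw [leftSubst, leftSubst, Nat.add_mod_right, hconst (x ((i + ℓ) / ℓ)) (x (i / ℓ))]

end LeftSubst

lemma exists_append_cons_of_ne {l₁ l₂ : List S} (hlen : l₁.length = l₂.length) (hne : l₁ ≠ l₂) :
    ∃ p a b s t, a ≠ b ∧ l₁ = p ++ a :: s ∧ l₂ = p ++ b :: t := by
  induction l₁ generalizing l₂ with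
  | nil => exact absurd (List.length_eq_zero_iff.1 hlen.symm).symm hne
  | cons a l₁ ih =>
    obtain ⟨b, l₂, rfl⟩ := List.exists_cons_of_length_eq_add_one hlen.symm
    by_cases hab : a = b
    · subst hab
      obtain ⟨p, c, d, s, t, hcd, h₁, h₂⟩ := ih (Nat.succ.inj hlen) fun h => hne (h ▸ rfl)
      exact ⟨a :: p, c, d, s, t, hcd, congrArg _ h₁, congrArg _ h₂⟩
    · exact ⟨[], a, b, l₁, l₂, hab, rfl, rfl⟩

/-! ### The winning shift -/

lemma WShiftZ_shiftOf {L : Set (List S)} (hL : IsFactorial L) (hext : IsExtendable L) :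
    WShiftZ (shiftOf L) = shiftOf (Wset L) :=
  congrArg (fun K => shiftOf (Wset K)) (langZ_shiftOf hL hext)

lemma exists_branches_of_shiftOf_Wset [Nonempty S] {L : Set (List S)} {a : ℤ → Bool}
    (ha : a ∈ shiftOf (Wset L)) {i : ℤ} {e : ℕ} (hi : a i = true) (he : a (i + e + 1) = true)
    (k : ℕ) :
    ∃ v : List S, v.length = k ∧
      ∀ b, ∃ u : List S, u.length = e ∧ ∀ c, v ++ (b :: u ++ [c]) ∈ L := by
  have hwin : factorZ a (i - k) k ++ true :: (factorZ a (i + 1) e ++ [true]) ∈ Wset L := by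
    have := mem_shiftOf.1 ha (i - k) (k + (1 + (e + 1)))
    rw [factorZ_add, factorZ_add, factorZ_add, factorZ_one, factorZ_one, sub_add_cancel, hi] at this
    rwa [Nat.cast_one, add_right_comm, he] at this
  obtain ⟨v, hv, hvwin⟩ := exists_of_append_mem_Wset hwin
  refine ⟨v, by rw [hv, length_factorZ], fun b => ?_⟩
  obtain ⟨u, hu, huwin⟩ := exists_of_append_mem_Wset (true_cons_mem_Wset.1 hvwin b)
  exact ⟨u, by rw [hu, length_factorZ], fun c => nil_mem_Wset.1 (true_cons_mem_Wset.1 huwin c)⟩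

lemma exists_leftShift_branches [Finite S] {L : Set (List S)} (hL : IsFactorial L) {e : ℕ}
    (hbranch : ∀ k, ∃ v : List S, v.length = k ∧
      ∀ b, ∃ u : List S, u.length = e ∧ ∀ c, v ++ (b :: u ++ [c]) ∈ L) :
    ∃ x, ∀ b, ∃ u : List S, u.length = e ∧ ∀ c, appendWord x (b :: u ++ [c]) ∈ leftShift L := by
  obtain ⟨x, hx⟩ := exists_forall_suffix_mem
    (K := {v | ∀ b, ∃ u : List S, u.length = e ∧ ∀ c, v ++ (b :: u ++ [c]) ∈ L})
    (fun v w hw ⟨t, ht⟩ b => (hw b).imp fun u hu => ⟨hu.1, fun c =>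
      hL (hu.2 c) ⟨t, [], by rw [List.append_nil, ← List.append_assoc, ht]⟩⟩)
    fun k => (hbranch k).imp fun v hv => ⟨hv.2, hv.1⟩
  refine ⟨x, fun b => ?_⟩
  by_contra! hno
  have hfail : ∀ u ∈ {u : List S | u.length = e}, ∀ᶠ n in Filter.atTop,
      ¬ ∀ c, suffix x n ++ (b :: u ++ [c]) ∈ L := by
    intro u hu
    obtain ⟨c, hc⟩ := hno u hu
    simp only [appendWord_mem_leftShift hL, not_forall] at hc
    obtain ⟨m, hm⟩ := hc
    filter_upwards [Filter.eventually_ge_atTop m] with n hn h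
    obtain ⟨t, ht⟩ : suffix x m <:+ suffix x n := by
      rw [← Nat.sub_add_cancel hn, suffix_add]
      exact List.suffix_append _ _
    exact hm (hL (h c) ⟨t, [], by rw [List.append_nil, ← List.append_assoc, ht]⟩)
  obtain ⟨n, hn⟩ := ((Filter.eventually_all_finite (List.finite_length_eq S e)).2 hfail).exists
  obtain ⟨u, hu, hmem⟩ := hx n b
  exact hn u hu hmem

lemma mem_rightSpecial_of_forall [Nontrivial S] {L : Set (List S)} {x : ℕ → S}
    (hx : ∀ c, appendWord x [c] ∈ leftShift L) : x ∈ rightSpecial L := by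
  obtain ⟨c, d, hcd⟩ := exists_pair_ne S
  exact ⟨c, d, hcd, hx c, hx d⟩

/-- The word `x` before the first turn of `B` and its prolongations up to the second one, one for
each first move of `B`, are all right special. There are more of them than last letters. -/
lemma not_exists_leftShift_branches [Finite S] [Nontrivial S] {L : Set (List S)}
    (hL : IsFactorial L) (haper : IsAperiodic (shiftOf L))
    (hinj : InjOn (fun x => x 0) (rightSpecial L)) (e : ℕ) :
    ¬ ∃ x, ∀ b, ∃ u : List S, u.length = e ∧ ∀ c, appendWord x (b :: u ++ [c]) ∈ leftShift L := by
  rintro ⟨x, hx⟩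
  choose u hu hmem using hx
  simp only [← appendWord_append] at hmem
  let z : Option S → ℕ → S := fun o => o.elim x fun b => appendWord x (b :: u b)
  have hxb : ∀ b, appendWord x [b] ∈ leftShift L := fun b =>
    mem_leftShift_of_append_mem hL (w := u b) (by
      rw [appendWord_append]
      exact mem_leftShift_of_append_mem hL (hmem b b))
  have hspecial : ∀ o, z o ∈ rightSpecial L :=
    Option.forall.2 ⟨mem_rightSpecial_of_forall hxb, fun b => mem_rightSpecial_of_forall (hmem b)⟩
  have hxz : ∀ b, x ≠ appendWord x (b :: u b) := fun b h => by
    refine haper.not_periodic_of_mem_leftShift hL (mem_leftShift_of_append_mem hL (hxb b))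
      (List.length_pos_of_mem List.mem_cons_self : 0 < (b :: u b).length) fun i => ?_
    nth_rw 1 [h]
    exact appendWord_add_length _ _ _
  have hzz : ∀ b b', appendWord x (b :: u b) = appendWord x (b' :: u b') → b = b' := by
    intro b b' h
    rw [← appendWord_cons_length x b (u b), ← appendWord_cons_length x b' (u b'), h, hu, hu]
  have hz : Injective z := by
    rintro (_ | b) (_ | b') h
    · rfl
    · exact absurd h (hxz b')
    · exact absurd h.symm (hxz b)
    · exact congrArg some (hzz b b' h)
  have hlast : Injective fun o => z o 0 := fun o o' h => hz (hinj (hspecial o) (hspecial o') h)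
  have hcard := Nat.card_le_card_of_injective _ hlast
  rw [Finite.card_option] at hcard
  omega

lemma eq_of_mem_shiftOf_Wset [Finite S] [Nontrivial S] {L : Set (List S)} (hL : IsFactorial L)
    (haper : IsAperiodic (shiftOf L)) (hinj : InjOn (fun x => x 0) (rightSpecial L)) {a : ℤ → Bool}
    (ha : a ∈ shiftOf (Wset L)) {i j : ℤ} (hi : a i = true) (hj : a j = true) : i = j := by
  wlog hij : i ≤ j generalizing i j
  · exact (this hj hi (le_of_not_ge hij)).symm
  by_contra hne
  obtain ⟨e, rfl⟩ : ∃ e : ℕ, j = i + e + 1 := ⟨(j - i - 1).toNat, by omega⟩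
  exact not_exists_leftShift_branches hL haper hinj e
    (exists_leftShift_branches hL (exists_branches_of_shiftOf_Wset ha hi hj))

lemma IsAperiodic.append_true_cons_mem_Wset {L : Set (List Bool)} (hL : IsFactorial L)
    (hext : IsExtendable L) (haper : IsAperiodic (shiftOf L)) (hne : (shiftOf L).Nonempty)
    {l r : List Bool} (hl : true ∉ l) (hr : true ∉ r) : l ++ true :: r ∈ Wset L := by
  obtain ⟨w, hw, c, d, hcd, hc, hd⟩ := haper.exists_right_special hne l.length
  refine append_mem_Wset hl hw (true_cons_mem_Wset.2 fun b => ?_)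
  have hb : w ++ [b] ∈ L := by
    obtain rfl | rfl : b = c ∨ b = d := by cases b <;> cases c <;> cases d <;> simp_all
    · exact hc
    · exact hd
  obtain ⟨v, hv, hwv⟩ := hext.exists_append_mem hL hb r.length
  exact mem_Wset_of_true_notMem hr hv (by simpa using hwv)

lemma IsAperiodic.mem_shiftOf_Wset {L : Set (List Bool)} (hL : IsFactorial L)
    (hext : IsExtendable L) (haper : IsAperiodic (shiftOf L)) (hne : (shiftOf L).Nonempty)
    {a : ℤ → Bool} (ha : ∀ i j, a i = true → a j = true → i = j) : a ∈ shiftOf (Wset L) := by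
  refine mem_shiftOf.2 fun i n => ?_
  by_cases htrue : true ∈ factorZ a i n
  · obtain ⟨k, hk, hik⟩ := mem_factorZ.1 htrue
    obtain ⟨m, rfl⟩ := Nat.exists_eq_add_of_lt hk
    rw [add_assoc, add_comm m, factorZ_add, factorZ_add, factorZ_one, hik]
    refine haper.append_true_cons_mem_Wset hL hext hne ?_ ?_
    all_goals
      intro h
      obtain ⟨k', hk', hik'⟩ := mem_factorZ.1 h
      have := ha _ _ hik hik'
      omega
  · obtain ⟨x, hx⟩ := hne
    exact mem_Wset_of_true_notMem htrue
      (by rw [length_factorZ, length_factorZ]) (mem_shiftOf.1 hx 0 n)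

lemma injOn_zero_rightSpecial_of_ne {τ : Bool → List Bool} {ℓ : ℕ} (hℓ : ∀ c, (τ c).length = ℓ)
    (h2 : 2 ≤ ℓ) (hext : IsExtendable (substLang τ)) (hτ : τ false ≠ τ true) :
    InjOn (fun x => x 0) (rightSpecial (substLang τ)) := by
  obtain ⟨p, a, b, s, t, hab, hfalse, htrue⟩ :=
    exists_append_cons_of_ne ((hℓ false).trans (hℓ true).symm) hτ
  refine injOn_zero_rightSpecial (f := fun c => bif c then b else a)
    (s := fun c => bif c then t else s) hℓ h2 (Bool.forall_bool.2 ⟨hfalse, htrue⟩)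
    (Bool.injective_iff.2 hab)
    (rightSpecial_finite (isFactorial_substLang τ) hext (frequently_complexity_substLang_le hℓ h2))

end WordGame

open WordGame

/-- The two-directional subshift of a primitive uniform aperiodic
substitution on `{0,1}` has winning shift consisting exactly of the configurations
with at most one occurrence of the letter `B`. -/
theorem winningShift_of_primitive_uniform_aperiodic_substitution
    (τ : Bool → List Bool)
    (huniform : (τ false).length = (τ true).length)
    (hprim : ∃ n : ℕ, ∀ s s' : Bool, s' ∈ substIter τ n s)
    (haper : ∀ x ∈ substShift τ, ∀ p : ℕ, 1 ≤ p → (fun i => x (i + (p : ℤ))) ≠ x) :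
    WShiftZ (substShift τ) =
      { a : ℤ → Bool | ∀ i j : ℤ, a i = true → a j = true → i = j } := by
  have hL := isFactorial_substLang τ
  have hext : IsExtendable (substLang τ) := IsPrimitive.isExtendable_substLang hprim
  have hℓ : ∀ c, (τ c).length = (τ true).length := Bool.forall_bool.2 ⟨huniform, rfl⟩
  have h2 : 2 ≤ (τ true).length := IsPrimitive.two_le_length hprim hℓ
  have haperiodic : IsAperiodic (shiftOf (substLang τ)) := fun x hx p hp hper =>
    haper x hx p hp (funext hper)
  have hne : (shiftOf (substLang τ)).Nonempty := shiftOf_substLang_nonempty hext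
  have hτ : τ false ≠ τ true := fun h =>
    haperiodic.not_forall_eq_of_uniform hne hℓ (by omega) (by simp [Bool.forall_bool, h])
  calc WShiftZ (substShift τ) = shiftOf (Wset (substLang τ)) := WShiftZ_shiftOf hL hext
    _ = {a | ∀ i j, a i = true → a j = true → i = j} := Set.Subset.antisymm
      (fun _ ha _ _ => eq_of_mem_shiftOf_Wset hL haperiodic
        (injOn_zero_rightSpecial_of_ne hℓ h2 hext hτ) ha)
      (fun _ => haperiodic.mem_shiftOf_Wset hL hext hne)
end
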